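/- For every ε ∈ (0, 0.25) there exist absolute constants C₁ and C₂ such that every finite simple graph G on n vertices with minimum degree δ ≥ 1 and without isolated edges satisfies s(G) ≤ (n/δ)·(1 + C₁/δ^ε) + C₂. -/

import Mathlib

noncomputable section

namespace FL

/-- The weighted degree of a vertex `v` under an edge weighting `f`. -/
def weightedDeg {V : Type*} [Fintype V] (G : SimpleGraph V) [DecidableRel G.Adj]
    (f : Sym2 V → ℕ) (v : V) : ℕ :=
  ∑ u ∈ G.neighborFinset v, f s(u, v)

/-- `f` is a `k`-irregular assignment for `G`: it takes values in `{1, …, k}` on the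
edges of `G` and the weighted degrees of the vertices are pairwise distinct. -/
def IsIrregularAssignment {V : Type*} [Fintype V] (G : SimpleGraph V) [DecidableRel G.Adj]
    (k : ℕ) (f : Sym2 V → ℕ) : Prop :=
  (∀ e ∈ G.edgeSet, f e ∈ Finset.Icc 1 k) ∧ Function.Injective (weightedDeg G f)

/-- The irregularity strength `s(G)`: the least positive integer `k` for which a
`k`-irregular assignment exists (`⊤ = ∞` if none exists). -/
def irregularityStrength {V : Type*} [Fintype V] (G : SimpleGraph V)
    [DecidableRel G.Adj] : ℕ∞ :=
  ⨅ (k : ℕ) (_ : 1 ≤ k) (_ : ∃ f : Sym2 V → ℕ, IsIrregularAssignment G k f), (k : ℕ∞)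

/-!
Split the vertices at random into a bulk `A`, a class `C` and a tiny reservoir `D`, and give every
vertex a uniform random label. An edge avoiding `D` is heavy, of weight `1 + h` with `h` about
`(n / δ) (1 + 10 / M)`, when the labels of its ends add up to at least a fixed threshold, and has
weight `1` otherwise. By Chernoff bounds the weighted degree of a typical vertex is close to an
affine function of its own label, so the weighted degrees are spread out: an interval of length `L`
contains at most about `(1 - 4 / M) L` of them. The atypical vertices have small volume, and a
maximality argument discards them together with few others, leaving cores `A'`, `C'`, `D'` of
mutually large degrees; the few remaining vertices receive distinct weights by raising edges.

Hall's theorem then provides distinct targets slightly above the current weights. Cutting the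
integers into blocks of length `K ≈ n / (8 δ)` numbered cyclically mod `M`, the targets of `A'` lie
in blocks numbered at least `3` and those of `C'` in blocks numbered `0`; they are reached by
raising edges into `D'`. Two corrections at the edges between `C'` and `D'` separate the vertices of
`D'`: transfers that do not affect `C'` spread their weights almost evenly mod `K`, and changes by
`K`, at most one for each vertex of `C'`, move them to distinct values in blocks numbered `2`. A
vertex of `C'` so changed ends in a block numbered `1`, hence no new coincidence arises.

Taking `M` about `min (δ ^ ε) (n / δ)` makes the exponentially small failure probabilities beat the
polynomial union bounds, because `ε < 1 / 4`; for bounded `δ` a greedy weighting suffices.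
-/

open Finset

section Probability

open scoped BigOperators

variable {Ω : Type*} [Fintype Ω]

/-- The probability of an event under the uniform distribution on a finite type. -/
def prob (E : Set Ω) : ℝ := 𝔼 ω, E.indicator 1 ω

lemma prob_eq_card_div (E : Set Ω) [DecidablePred (· ∈ E)] :
    prob E = #{ω | ω ∈ E} / Fintype.card Ω := by
  simp [prob, Fintype.expect_eq_sum_div_card, Set.indicator_apply, sum_boole]

lemma prob_mono {E F : Set Ω} (h : E ⊆ F) : prob E ≤ prob F :=
  expect_le_expect fun ω _ ↦ Set.indicator_le_indicator_of_subset h (fun _ ↦ zero_le_one) ω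

lemma prob_le_one [Nonempty Ω] (E : Set Ω) : prob E ≤ 1 := by
  simpa [prob] using prob_mono E.subset_univ

lemma prob_univ [Nonempty Ω] : prob (Set.univ : Set Ω) = 1 := by
  simp [prob]

lemma prob_union_le (E F : Set Ω) : prob (E ∪ F) ≤ prob E + prob F := by
  simp only [prob, ← expect_add_distrib]
  refine expect_le_expect fun ω _ ↦ ?_
  by_cases hE : ω ∈ E <;> by_cases hF : ω ∈ F <;> simp [hE, hF]

lemma prob_biUnion_le {ι : Type*} (s : Finset ι) (E : ι → Set Ω) :
    prob (⋃ i ∈ s, E i) ≤ ∑ i ∈ s, prob (E i) := by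
  classical
  induction s using Finset.induction_on with
  | empty => simp [prob]
  | insert i s hi ih =>
    rw [set_biUnion_insert, sum_insert hi]
    exact (prob_union_le _ _).trans (by gcongr)

lemma prob_compl [Nonempty Ω] (E : Set Ω) : prob Eᶜ = 1 - prob E := by
  have hsum : prob E + prob Eᶜ = 1 := by
    simp only [prob, ← expect_add_distrib]
    simp [Set.indicator_self_add_compl_apply]
  linarith

lemma exists_notMem_of_prob_lt_one [Nonempty Ω] {E : Set Ω} (h : prob E < 1) : ∃ ω, ω ∉ E := by
  by_contra! hE
  have : prob E = 1 := by simp [prob, Set.eq_univ_of_forall hE]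
  exact h.ne this

lemma prob_le_expect_div {X : Ω → ℝ} {t : ℝ} (hX : ∀ ω, 0 ≤ X ω) (ht : 0 < t) :
    prob {ω | t ≤ X ω} ≤ (𝔼 ω, X ω) / t := by
  rw [prob, expect_div]
  refine expect_le_expect fun ω _ ↦ Set.indicator_le' (g := fun ω ↦ X ω / t) (fun ω hω ↦ ?_)
    (fun ω _ ↦ ?_) ω
  · exact (one_le_div ht).2 (Set.mem_ofPred.1 hω)
  · exact div_nonneg (hX ω) ht.le

lemma prob_prod {Ω' : Type*} [Fintype Ω'] (E : Set Ω) (F : Set Ω') :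
    prob (E ×ˢ F) = prob E * prob F := by
  classical
  have hEF : #{ω : Ω × Ω' | ω ∈ E ×ˢ F} = #{a | a ∈ E} * #{b | b ∈ F} := by
    rw [← card_product]
    congr 1
    ext; simp
  rw [prob_eq_card_div, prob_eq_card_div, prob_eq_card_div, hEF, Fintype.card_prod]
  push_cast
  exact mul_div_mul_comm _ _ _ _

lemma prob_fin_val_mem {N : ℕ} {s : Finset ℕ} (hs : s ⊆ range N) :
    prob {i : Fin N | (i : ℕ) ∈ s} = #s / N := by
  have hmap : ({i | (i : ℕ) ∈ s} : Finset (Fin N)).map Fin.valEmbedding = s := by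
    ext a
    simp only [mem_map, mem_filter, mem_univ, true_and, Fin.valEmbedding_apply]
    exact ⟨by rintro ⟨i, hi, rfl⟩; exact hi, fun ha ↦ ⟨⟨a, mem_range.1 (hs ha)⟩, ha, rfl⟩⟩
  rw [prob_eq_card_div, Fintype.card_fin]
  simp only [Set.mem_ofPred_eq]
  rw [← card_map Fin.valEmbedding, hmap]

lemma exp_mul_le_one_add {l x : ℝ} (hl₀ : 0 ≤ l) (hl₁ : l ≤ 1) (hx₀ : 0 ≤ x) (hx₁ : x ≤ 1) :
    Real.exp (l * x) ≤ 1 + (l + l ^ 2) * x := by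
  have hlx : |l * x| ≤ 1 := by
    rw [abs_of_nonneg (by positivity)]
    exact mul_le_one₀ hl₁ hx₀ hx₁
  have hexp := (abs_le.1 (Real.abs_exp_sub_one_sub_id_le hlx)).2
  have hsq : l ^ 2 * x ^ 2 ≤ l ^ 2 * x := by gcongr; nlinarith
  nlinarith

lemma expect_exp_mul_le [Nonempty Ω] {X : Ω → ℝ} {l : ℝ} (hl₀ : 0 ≤ l) (hl₁ : l ≤ 1)
    (hX₀ : ∀ a, 0 ≤ X a) (hX₁ : ∀ a, X a ≤ 1) :
    𝔼 a, Real.exp (l * X a) ≤ Real.exp ((l + l ^ 2) * 𝔼 a, X a) := calc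
  𝔼 a, Real.exp (l * X a) ≤ 𝔼 a, (1 + (l + l ^ 2) * X a) :=
    expect_le_expect fun a _ ↦ exp_mul_le_one_add hl₀ hl₁ (hX₀ a) (hX₁ a)
  _ = (l + l ^ 2) * (𝔼 a, X a) + 1 := by
    rw [expect_add_distrib, ← mul_expect, Fintype.expect_const, add_comm]
  _ ≤ Real.exp ((l + l ^ 2) * 𝔼 a, X a) := Real.add_one_le_exp _

variable {V : Type*} [Fintype V] [DecidableEq V]

lemma expect_prod_eq_prod_expect [Nonempty Ω] (s : Finset V) (f : V → Ω → ℝ) :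
    𝔼 ω : V → Ω, ∏ v ∈ s, f v (ω v) = ∏ v ∈ s, 𝔼 a, f v a := by
  have hsum : ∑ ω : V → Ω, ∏ v ∈ s, f v (ω v) = ∏ v, ∑ a, if v ∈ s then f v a else 1 := by
    rw [prod_univ_sum]
    simp [prod_ite_mem]
  calc 𝔼 ω : V → Ω, ∏ v ∈ s, f v (ω v)
    _ = ∏ v, (∑ a, if v ∈ s then f v a else 1) / (Fintype.card Ω : ℝ) := by
      rw [Fintype.expect_eq_sum_div_card, hsum, prod_div_distrib, prod_const, card_univ,
        Fintype.card_fun, Nat.cast_pow]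
    _ = ∏ v, if v ∈ s then 𝔼 a, f v a else 1 :=
      prod_congr rfl fun v _ ↦ by split_ifs <;> simp [Fintype.expect_eq_sum_div_card]
    _ = ∏ v ∈ s, 𝔼 a, f v a := by rw [prod_ite_mem, univ_inter]

lemma expect_exp_sum_le [Nonempty Ω] (s : Finset V) {X : V → Ω → ℝ} {l : ℝ} (hl₀ : 0 ≤ l)
    (hl₁ : l ≤ 1) (hX₀ : ∀ v a, 0 ≤ X v a) (hX₁ : ∀ v a, X v a ≤ 1) :
    𝔼 ω : V → Ω, Real.exp (l * ∑ v ∈ s, X v (ω v)) ≤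
      Real.exp ((l + l ^ 2) * ∑ v ∈ s, 𝔼 a, X v a) := by
  simp only [mul_sum, Real.exp_sum]
  rw [expect_prod_eq_prod_expect s fun v a ↦ Real.exp (l * X v a)]
  exact prod_le_prod (fun v _ ↦ expect_nonneg fun a _ ↦ (Real.exp_pos _).le)
    fun v _ ↦ expect_exp_mul_le hl₀ hl₁ (hX₀ v) (hX₁ v)

/-- The exponent comes from the choice `l = T / (2 * B)` in the exponential Markov inequality. -/
lemma prob_le_sum_le_exp [Nonempty Ω] (s : Finset V) {X : V → Ω → ℝ} (hX₀ : ∀ v a, 0 ≤ X v a)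
    (hX₁ : ∀ v a, X v a ≤ 1) {B T : ℝ} (hB : 0 < B) (hT : 0 ≤ T) (hTB : T ≤ 2 * B)
    (hmean : ∑ v ∈ s, 𝔼 a, X v a ≤ B) :
    prob {ω : V → Ω | (∑ v ∈ s, 𝔼 a, X v a) + T ≤ ∑ v ∈ s, X v (ω v)} ≤
      Real.exp (-(T ^ 2 / (4 * B))) := by
  set m := ∑ v ∈ s, 𝔼 a, X v a
  set l := T / (2 * B) with hl
  have hl₀ : 0 ≤ l := by positivity
  have hl₁ : l ≤ 1 := (div_le_one (by positivity)).2 hTB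
  calc prob {ω : V → Ω | m + T ≤ ∑ v ∈ s, X v (ω v)}
    _ ≤ prob {ω : V → Ω | Real.exp (l * (m + T)) ≤ Real.exp (l * ∑ v ∈ s, X v (ω v))} :=
      prob_mono fun ω hω ↦ Real.exp_le_exp.2 (mul_le_mul_of_nonneg_left hω hl₀)
    _ ≤ (𝔼 ω : V → Ω, Real.exp (l * ∑ v ∈ s, X v (ω v))) / Real.exp (l * (m + T)) :=
      prob_le_expect_div (fun ω ↦ (Real.exp_pos _).le) (Real.exp_pos _)
    _ ≤ Real.exp ((l + l ^ 2) * m) / Real.exp (l * (m + T)) := by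
      gcongr
      exact expect_exp_sum_le s hl₀ hl₁ hX₀ hX₁
    _ ≤ Real.exp (-(T ^ 2 / (4 * B))) := by
      rw [← Real.exp_sub, Real.exp_le_exp]
      have hmB : l ^ 2 * m ≤ l ^ 2 * B := by gcongr
      have hopt : l ^ 2 * B - l * T = -(T ^ 2 / (4 * B)) := by rw [hl]; field_simp; ring
      linarith

lemma prob_card_ge_le_exp [Nonempty Ω] (s : Finset V) (E : V → Set Ω)
    [∀ v, DecidablePred (· ∈ E v)] {B T : ℝ} (hB : 0 < B) (hT : 0 ≤ T) (hTB : T ≤ 2 * B)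
    (hmean : ∑ v ∈ s, prob (E v) ≤ B) :
    prob {ω : V → Ω | (∑ v ∈ s, prob (E v)) + T ≤ #{v ∈ s | ω v ∈ E v}} ≤
      Real.exp (-(T ^ 2 / (4 * B))) := by
  have hcard (ω : V → Ω) :
      (#{v ∈ s | ω v ∈ E v} : ℝ) = ∑ v ∈ s, (E v).indicator (1 : Ω → ℝ) (ω v) := by
    simp [Set.indicator_apply, sum_boole]
  simp only [hcard]
  exact prob_le_sum_le_exp s (fun v ↦ Set.indicator_nonneg fun _ _ ↦ zero_le_one)
    (fun v ↦ Set.indicator_le_self' fun _ _ ↦ zero_le_one) hB hT hTB hmean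

lemma prob_abs_card_sub_gt_le_exp [Nonempty Ω] {s : Finset V} (hs : s.Nonempty) (E : Set Ω)
    [DecidablePred (· ∈ E)] {τ : ℝ} (hτ₀ : 0 ≤ τ) (hτ₁ : τ ≤ 1) :
    prob {ω : V → Ω | τ * #s < |(#{v ∈ s | ω v ∈ E} : ℝ) - prob E * #s|} ≤
      2 * Real.exp (-(τ ^ 2 * #s / 4)) := by
  have hs₀ : (0 : ℝ) < #s := by exact_mod_cast hs.card_pos
  have hexp : (τ * #s) ^ 2 / (4 * #s) = τ ^ 2 * #s / 4 := by field_simp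
  have htail (F : Set Ω) [DecidablePred (· ∈ F)] :
      prob {ω : V → Ω | prob F * #s + τ * #s ≤ #{v ∈ s | ω v ∈ F}} ≤
        Real.exp (-(τ ^ 2 * #s / 4)) := by
    have := prob_card_ge_le_exp s (fun _ ↦ F) hs₀ (T := τ * #s) (by positivity) (by nlinarith)
      (by simpa using mul_le_of_le_one_right hs₀.le (prob_le_one F))
    rw [hexp] at this
    simpa [mul_comm] using this
  rw [two_mul]
  refine (prob_mono fun ω hω ↦ ?_).trans ((prob_union_le _ _).trans
    (add_le_add (htail E) (htail Eᶜ)))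
  have hsplit : (#{v ∈ s | ω v ∈ E} : ℝ) + #{v ∈ s | ω v ∈ Eᶜ} = #s := by
    exact_mod_cast card_filter_add_card_filter_not fun v ↦ ω v ∈ E
  rcases lt_abs.1 (Set.mem_ofPred.1 hω) with h | h
  · left
    simp only [Set.mem_ofPred_eq]
    linarith
  · right
    simp only [Set.mem_ofPred_eq, prob_compl]
    linarith

end Probability

section Perturbation

variable {V : Type*}

/-- The ordered pairs of distinct vertices of `S` on which `w` takes equal values. -/
def collisions {α : Type*} [DecidableEq V] [DecidableEq α] (S : Finset V) (w : V → α) :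
    Finset (V × V) :=
  {p ∈ S.offDiag | w p.1 = w p.2}

-- Each endpoint of the raised edge excludes at most `#S` values of `j`.
lemma exists_collisions_raise_ssubset [DecidableEq V] {S : Finset V} (w : V → ℕ) (c : ℕ)
    {u u' v : V} (hu : u ∈ S) (hv : v ∈ S) (hve : v ∉ s(u, u')) (huv : w u + c = w v) :
    ∃ j ≤ 2 * #S, collisions S (fun a ↦ w a + if a ∈ s(u, u') then j else 0) ⊂
      collisions S (fun a ↦ w a + if a ∈ s(u, u') then c else 0) := by
  let excluded : Finset ℕ := S.image (fun b ↦ w b - w u) ∪ S.image (fun b ↦ w b - w u')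
  have hexcluded : #excluded < #(range (2 * #S + 1)) := calc
    #excluded ≤ #S + #S :=
      (card_union_le _ _).trans (add_le_add card_image_le card_image_le)
    _ < #(range (2 * #S + 1)) := by rw [card_range]; omega
  obtain ⟨j, hj, hj'⟩ := exists_mem_notMem_of_card_lt_card hexcluded
  have hne {a b : V} (hb : b ∈ S) (ha : a ∈ s(u, u')) : w a + j ≠ w b := by
    intro hab
    refine hj' (mem_union.2 ?_)
    rcases Sym2.mem_iff.1 ha with rfl | rfl
    · exact .inl (mem_image.2 ⟨b, hb, by omega⟩)
    · exact .inr (mem_image.2 ⟨b, hb, by omega⟩)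
  have hue : u ∈ s(u, u') := Sym2.mem_mk_left u u'
  refine ⟨j, by simpa [Nat.lt_succ_iff] using hj, ?_⟩
  rw [ssubset_iff_of_subset]
  · have huv' : u ≠ v := by rintro rfl; exact hve hue
    refine ⟨(u, v), mem_filter.2 ⟨mem_offDiag.2 ⟨hu, hv, huv'⟩, ?_⟩, fun h ↦ ?_⟩
    · simpa only [if_pos hue, if_neg hve, add_zero] using huv
    · have := (mem_filter.1 h).2
      simp only [if_pos hue, if_neg hve, add_zero] at this
      exact hne hv hue this
  · rintro ⟨a, b⟩ hab
    simp only [collisions, mem_filter, mem_offDiag] at hab ⊢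
    refine ⟨hab.1, ?_⟩
    have heq := hab.2
    have hab₁ := hne hab.1.2.1 (a := a)
    have hab₂ := hne hab.1.1 (a := b)
    split_ifs at heq ⊢ <;> simp_all

/-- `g` raises the weighting `f` by at most `m`, on edges meeting `S` only. -/
def IsRaise (S : Finset V) (m : ℕ) (f g : Sym2 V → ℕ) : Prop :=
  ∀ e, f e ≤ g e ∧ g e ≤ f e + m ∧ ((∀ u ∈ S, u ∉ e) → g e = f e)

lemma IsRaise.update [DecidableEq V] {S : Finset V} {m j : ℕ} {f g : Sym2 V → ℕ} {e : Sym2 V}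
    (hg : IsRaise S m f g) (hj : j ≤ m) {u : V} (hu : u ∈ S) (hue : u ∈ e) :
    IsRaise S m f (Function.update g e (f e + j)) := by
  intro e'
  rcases eq_or_ne e' e with rfl | hne
  · simpa [hj] using fun h ↦ absurd hue (h u hu)
  · simpa only [Function.update_of_ne hne] using hg e'

variable [Fintype V] (G : SimpleGraph V) [DecidableRel G.Adj]

lemma weightedDeg_eq_sum (f : Sym2 V → ℕ) (v : V) :
    weightedDeg G f v = ∑ u with G.Adj v u, f s(v, u) := by
  rw [weightedDeg, SimpleGraph.neighborFinset_eq_filter]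
  exact sum_congr rfl fun u _ ↦ by rw [Sym2.eq_swap]

lemma weightedDeg_update_add [DecidableEq V] (f : Sym2 V → ℕ) {e : Sym2 V} (he : e ∈ G.edgeSet)
    (i j : ℕ) (v : V) :
    weightedDeg G (Function.update f e (i + j)) v =
      weightedDeg G (Function.update f e i) v + if v ∈ e then j else 0 := by
  simp only [weightedDeg_eq_sum]
  split_ifs with hv
  · obtain ⟨u, rfl⟩ := hv
    have hu : u ∈ ({u | G.Adj v u} : Finset V) := by simpa using he
    rw [← add_sum_erase _ _ hu, ← add_sum_erase _ _ hu, Function.update_self,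
      Function.update_self, add_right_comm]
    congr 2
    refine sum_congr rfl fun w hw ↦ ?_
    have hwu : s(v, w) ≠ s(v, u) := fun h ↦ ne_of_mem_erase hw (Sym2.congr_right.1 h)
    rw [Function.update_of_ne hwu, Function.update_of_ne hwu]
  · refine sum_congr rfl fun u _ ↦ ?_
    have hu : s(v, u) ≠ e := by rintro rfl; exact hv (Sym2.mem_mk_left v u)
    rw [Function.update_of_ne hu, Function.update_of_ne hu]

variable {G}

lemma exists_isRaise_collisions_ssubset [DecidableEq V] {S : Finset V} {f g : Sym2 V → ℕ}
    (hg : IsRaise S (2 * #S) f g) {u u' v : V} (hu : u ∈ S) (hv : v ∈ S) (huu' : G.Adj u u')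
    (hu'v : u' ≠ v) (huv : u ≠ v) (hcoll : weightedDeg G g u = weightedDeg G g v) :
    ∃ g', IsRaise S (2 * #S) f g' ∧
      collisions S (weightedDeg G g') ⊂ collisions S (weightedDeg G g) := by
  have hweight (j : ℕ) := funext (weightedDeg_update_add G g (e := s(u, u')) huu' (f s(u, u')) j)
  have hcurrent := hweight (g s(u, u') - f s(u, u'))
  rw [Nat.add_sub_cancel' (hg s(u, u')).1, Function.update_eq_self] at hcurrent
  have hve : v ∉ s(u, u') := by simp [huv.symm, hu'v.symm]
  rw [hcurrent] at hcoll ⊢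
  simp only [Sym2.mem_mk_left, if_true, if_neg hve, add_zero] at hcoll
  obtain ⟨j, hj, hlt⟩ := exists_collisions_raise_ssubset _ _ hu hv hve hcoll
  rw [← hweight] at hlt
  exact ⟨_, hg.update hj hu (Sym2.mem_mk_left u u'), hlt⟩

lemma exists_isRaise_injOn (S : Finset V) (f : Sym2 V → ℕ)
    (hS : (S : Set V).Pairwise fun u v ↦
      (∃ u', G.Adj u u' ∧ u' ≠ v) ∨ ∃ v', G.Adj v v' ∧ v' ≠ u) :
    ∃ g, IsRaise S (2 * #S) f g ∧ Set.InjOn (weightedDeg G g) S := by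
  classical
  obtain ⟨g, hg, hmin⟩ := exists_minimalFor_of_wellFoundedLT (IsRaise S (2 * #S) f)
    (fun g ↦ #(collisions S (weightedDeg G g))) ⟨f, fun e ↦ by simp⟩
  have hsep {u v u' : V} (hu : u ∈ S) (hv : v ∈ S) (huu' : G.Adj u u') (hu'v : u' ≠ v)
      (huv : u ≠ v) : weightedDeg G g u ≠ weightedDeg G g v := by
    intro hcoll
    obtain ⟨g', hg', hlt⟩ := exists_isRaise_collisions_ssubset hg hu hv huu' hu'v huv hcoll
    exact (card_lt_card hlt).not_ge (hmin hg' (card_lt_card hlt).le)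
  refine ⟨g, hg, fun u hu v hv huv ↦ by_contra fun hne ↦ ?_⟩
  rcases hS hu hv hne with ⟨u', huu', hu'⟩ | ⟨v', hvv', hv'⟩
  · exact hsep hu hv huu' hu' hne huv
  · exact hsep hv hu hvv' hv' (Ne.symm hne) huv.symm

lemma exists_adj_ne_of_degree_ne_one {u v : V} (hu : 1 ≤ G.degree u)
    (huv : ¬ (G.Adj u v ∧ G.degree u = 1)) :
    ∃ u', G.Adj u u' ∧ u' ≠ v := by
  by_contra! h
  obtain ⟨w, huw⟩ := (G.degree_pos_iff_exists_adj u).1 hu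
  obtain rfl := h w huw
  refine huv ⟨huw, (G.degree_eq_one_iff_existsUnique_adj).2 ⟨w, huw, h⟩⟩

lemma exists_isIrregularAssignment_two_mul_card_add_one (hdeg : ∀ v, 1 ≤ G.degree v)
    (hiso : ¬ ∃ u v : V, G.Adj u v ∧ G.degree u = 1 ∧ G.degree v = 1) :
    ∃ f, IsIrregularAssignment G (2 * Fintype.card V + 1) f := by
  obtain ⟨g, hg, hinj⟩ := exists_isRaise_injOn (G := G) univ 1 fun u _ v _ _ ↦ by
    by_cases hu : G.Adj u v ∧ G.degree u = 1
    · exact .inr (exists_adj_ne_of_degree_ne_one (hdeg v)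
        fun hv ↦ hiso ⟨u, v, hu.1, hu.2, hv.2⟩)
    · exact .inl (exists_adj_ne_of_degree_ne_one (hdeg u) hu)
  refine ⟨g, fun e _ ↦ mem_Icc.2 ⟨(hg e).1, ?_⟩, by simpa [Set.injOn_univ] using hinj⟩
  simpa [add_comm] using (hg e).2.1

lemma exists_irregularityStrength_eq_le {k : ℕ} (hG : ∃ u v, G.Adj u v)
    (hk : ∃ f, IsIrregularAssignment G k f) :
    ∃ s : ℕ, irregularityStrength G = s ∧ s ≤ k := by
  have hk₁ : 1 ≤ k := by
    obtain ⟨u, v, huv⟩ := hG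
    obtain ⟨f, hf, -⟩ := hk
    have := mem_Icc.1 (hf s(u, v) huv)
    omega
  have hle : irregularityStrength G ≤ k :=
    iInf_le_of_le k (iInf_le_of_le hk₁ (iInf_le_of_le hk le_rfl))
  obtain ⟨s, hs⟩ := ENat.ne_top_iff_exists.1 (ne_top_of_le_ne_top (ENat.natCast_ne_top k) hle)
  exact ⟨s, hs.symm, by rw [← hs] at hle; exact_mod_cast hle⟩

end Perturbation

section Placement

variable {V : Type*} (f : V → ℕ) (E : ℕ)

lemma exists_gap {T : Finset V} (hT : T.Nonempty) :
    ∃ v₀ ∈ T, ∃ v₁ ∈ T, (∀ v ∈ T, f v₀ ≤ f v) ∧ (∀ v ∈ T, f v ≤ f v₁ ∨ f v₁ + E < f v) ∧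
      ∀ a ∈ Icc (f v₀) (f v₁ + E), ∃ v ∈ T, a ∈ Icc (f v) (f v + E) := by
  obtain ⟨v₀, hv₀, hmin⟩ := exists_min_image T f hT
  obtain ⟨v₂, hv₂, hmax⟩ := exists_max_image T f hT
  obtain ⟨v₁, hv₁, hfirst⟩ := exists_min_image {v ∈ T | ∀ u ∈ T, f u ≤ f v ∨ f v + E < f u} f
    ⟨v₂, mem_filter.2 ⟨hv₂, fun u hu ↦ .inl (hmax u hu)⟩⟩
  rw [mem_filter] at hv₁
  refine ⟨v₀, hv₀, v₁, hv₁.1, hmin, hv₁.2, fun a ha ↦ ?_⟩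
  rw [mem_Icc] at ha
  obtain ⟨u, hu, hlast⟩ := exists_max_image {v ∈ T | f v ≤ a} f ⟨v₀, mem_filter.2 ⟨hv₀, ha.1⟩⟩
  rw [mem_filter] at hu
  refine ⟨u, hu.1, mem_Icc.2 ⟨hu.2, not_lt.1 fun hau ↦ ?_⟩⟩
  have hgap : ∀ w ∈ T, f w ≤ f u ∨ f u + E < f w := fun w hw ↦ by
    rcases le_or_gt (f w) a with hwa | hwa
    · exact .inl (hlast w (mem_filter.2 ⟨hw, hwa⟩))
    · exact .inr (hau.trans hwa)
  have := hfirst u (mem_filter.2 ⟨hu.1, hgap⟩)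
  omega

-- Cut `T` at its first gap; below the gap the intervals cover a whole interval of `ℕ`.
lemma card_le_card_biUnion_filter_Icc {W : Finset V} {P : ℕ → Prop}
    [DecidablePred P] (h : ∀ u ∈ W, ∀ w ∈ W, f u ≤ f w →
      #{v ∈ W | f v ∈ Icc (f u) (f w)} ≤ #{t ∈ Icc (f u) (f w + E) | P t})
    (T : Finset V) (hT : T ⊆ W) :
    #T ≤ #(T.biUnion fun v ↦ {t ∈ Icc (f v) (f v + E) | P t}) := by
  induction T using Finset.strongInduction with
  | H T ih =>
    rcases T.eq_empty_or_nonempty with rfl | hne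
    · simp
    obtain ⟨v₀, hv₀, v₁, hv₁, hmin, hgap, hcover⟩ := exists_gap f E hne
    have hlow : #{v ∈ T | f v ≤ f v₁} ≤ #{t ∈ Icc (f v₀) (f v₁ + E) | P t} := by
      refine (card_le_card fun v hv ↦ ?_).trans (h v₀ (hT hv₀) v₁ (hT hv₁) (hmin v₁ hv₁))
      rw [mem_filter] at hv
      exact mem_filter.2 ⟨hT hv.1, mem_Icc.2 ⟨hmin v hv.1, hv.2⟩⟩
    have hhigh := ih {v ∈ T | ¬ f v ≤ f v₁}
      (filter_ssubset.2 ⟨v₁, hv₁, not_not.2 le_rfl⟩) ((filter_subset _ _).trans hT)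
    have hdisj : Disjoint {t ∈ Icc (f v₀) (f v₁ + E) | P t}
        ({v ∈ T | ¬ f v ≤ f v₁}.biUnion fun v ↦ {t ∈ Icc (f v) (f v + E) | P t}) := by
      rw [disjoint_left]
      intro t ht ht'
      simp only [mem_filter, mem_biUnion, mem_Icc] at ht ht'
      obtain ⟨v, ⟨hv, hv'⟩, hvt, -⟩ := ht'
      have := (hgap v hv).resolve_left hv'
      omega
    rw [← card_filter_add_card_filter_not (s := T) (fun v ↦ f v ≤ f v₁)]
    refine (add_le_add hlow hhigh).trans ?_
    rw [← card_union_of_disjoint hdisj]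
    refine card_le_card (union_subset (fun t ht ↦ ?_)
      (biUnion_subset_biUnion_of_subset_left _ (filter_subset _ _)))
    rw [mem_filter] at ht
    obtain ⟨v, hv, hvt⟩ := hcover t ht.1
    exact mem_biUnion.2 ⟨v, hv, mem_filter.2 ⟨hvt, ht.2⟩⟩

lemma exists_injOn_mem_Icc {W : Finset V} {P : ℕ → Prop} [DecidablePred P]
    (h : ∀ u ∈ W, ∀ w ∈ W, f u ≤ f w →
      #{v ∈ W | f v ∈ Icc (f u) (f w)} ≤ #{t ∈ Icc (f u) (f w + E) | P t}) :
    ∃ t : V → ℕ, Set.InjOn t W ∧ ∀ v ∈ W, t v ∈ Icc (f v) (f v + E) ∧ P (t v) := by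
  classical
  have hhall (s : Finset W) :
      #s ≤ #(s.biUnion fun v ↦ {t ∈ Icc (f v) (f v + E) | P t}) := by
    have := card_le_card_biUnion_filter_Icc f E h (s.map (.subtype _)) fun v hv ↦ by
      obtain ⟨w, -, rfl⟩ := mem_map.1 hv
      exact w.2
    rwa [card_map, map_eq_image, image_biUnion] at this
  obtain ⟨t, htinj, ht⟩ := (all_card_le_biUnion_card_iff_exists_injective _).1 hhall
  refine ⟨fun v ↦ if hv : v ∈ W then t ⟨v, hv⟩ else 0, fun u hu v hv huv ↦ ?_, fun v hv ↦ ?_⟩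
  · rw [mem_coe] at hu hv
    simp only [dif_pos hu, dif_pos hv] at huv
    exact congrArg Subtype.val (htinj huv)
  · simp only [dif_pos hv]
    exact mem_filter.1 (ht ⟨v, hv⟩)

end Placement

section Blocks

/-- The class modulo `M` of the index of the block of length `K` containing `t`. -/
def blockClass (K M t : ℕ) : ℕ :=
  t / K % M

variable {K M : ℕ}

lemma blockClass_add_mul (hK : 0 < K) (t j : ℕ) :
    blockClass K M (t + j * (M * K)) = blockClass K M t := by
  rw [blockClass, ← mul_assoc, Nat.add_mul_div_right _ _ hK, Nat.add_mul_mod_self_right,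
    blockClass]

lemma card_filter_blockClass_period (hK : 0 < K) {R : Finset ℕ} (hR : R ⊆ range M) (a : ℕ) :
    #R * K ≤ #{t ∈ Ico a (a + M * K) | blockClass K M t ∈ R} := by
  rw [Nat.filter_Ico_card_eq_of_periodic _ _ _ (fun t ↦ by
    simpa using congrArg (· ∈ R) (blockClass_add_mul hK t 1)),
    Nat.count_eq_card_filter_range, ← card_range K, ← card_product]
  have hdiv {r b : ℕ} (hb : b < K) : (b + r * K) / K = r := by
    rw [Nat.add_mul_div_right _ _ hK, Nat.div_eq_of_lt hb, zero_add]
  refine card_le_card_of_injOn (fun p ↦ p.2 + p.1 * K) ?_ ?_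
  · rintro ⟨r, b⟩ hp
    simp only [coe_product, Set.mem_prod, mem_coe, mem_range] at hp
    have hr : r < M := mem_range.1 (hR hp.1)
    have hlt : b + r * K < M * K :=
      (Nat.add_lt_add_right hp.2 _).trans_le (by nlinarith [Nat.mul_le_mul_right K hr])
    simpa [blockClass, hdiv hp.2, Nat.mod_eq_of_lt hr, hp.1] using hlt
  · rintro ⟨r, b⟩ hp ⟨r', b'⟩ hp' heq
    simp only [coe_product, Set.mem_prod, mem_coe, mem_range] at hp hp' heq
    obtain rfl : r = r' := by rw [← hdiv (r := r) hp.2, heq, hdiv hp'.2]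
    simpa using heq

lemma card_filter_blockClass_periods (hK : 0 < K) {R : Finset ℕ} (hR : R ⊆ range M) (a j : ℕ) :
    j * (#R * K) ≤ #{t ∈ Ico a (a + j * (M * K)) | blockClass K M t ∈ R} := by
  induction j with
  | zero => simp
  | succ j ih =>
    have hsplit := Ico_union_Ico_eq_Ico (Nat.le_add_right a (j * (M * K)))
      (Nat.le_add_right _ (M * K))
    rw [add_one_mul, add_one_mul, ← add_assoc, ← hsplit, filter_union, card_union_of_disjoint
      (disjoint_filter_filter (Ico_disjoint_Ico_consecutive _ _ _))]
    exact add_le_add ih (card_filter_blockClass_period hK hR _)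

lemma card_mul_sub_le_card_filter_blockClass (hK : 0 < K) {R : Finset ℕ} (hR : R ⊆ range M)
    (x y : ℕ) :
    #R * (y - x) ≤ M * (#{t ∈ Icc x y | blockClass K M t ∈ R} + #R * K) := by
  rcases M.eq_zero_or_pos with rfl | hM
  · simp [show R = ∅ by simpa using hR]
  rcases (Nat.zero_le (y - x)).eq_or_lt with hxy | hxy
  · simp [← hxy]
  set j := (y - x) / (M * K)
  have hj : j * (M * K) ≤ y - x := Nat.div_mul_le_self _ _
  have hj' : y - x ≤ (j + 1) * (M * K) := by
    rw [add_one_mul]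
    exact (Nat.lt_div_mul_add (Nat.mul_pos hM hK)).le
  calc #R * (y - x) ≤ #R * ((j + 1) * (M * K)) := Nat.mul_le_mul_left _ hj'
    _ = M * (j * (#R * K) + #R * K) := by ring
    _ ≤ _ := by
      gcongr
      refine (card_filter_blockClass_periods hK hR x j).trans
        (card_le_card (filter_subset_filter _ fun t ht ↦ ?_))
      rw [mem_Ico] at ht
      rw [mem_Icc]
      omega

lemma exists_injOn_blockClass {V : Type*} {f : V → ℕ} {W : Finset V} {E : ℕ} (hK : 0 < K)
    (hM : 0 < M) {R : Finset ℕ} (hR : R ⊆ range M) (X : Finset ℕ) {α β : ℝ} (hα : α * M ≤ #R)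
    (hβ : M * (β + #R * K + #X) ≤ #R * E)
    (hwin : ∀ u ∈ W, ∀ w ∈ W, f u ≤ f w →
      #{v ∈ W | f v ∈ Icc (f u) (f w)} ≤ α * (f w - f u) + β) :
    ∃ t : V → ℕ, Set.InjOn t W ∧
      ∀ v ∈ W, t v ∈ Icc (f v) (f v + E) ∧ blockClass K M (t v) ∈ R ∧ t v ∉ X := by
  refine exists_injOn_mem_Icc f E (P := fun t ↦ blockClass K M t ∈ R ∧ t ∉ X)
    fun u hu w hw huw ↦ ?_
  set I := Icc (f u) (f w + E)
  have havoid : #{t ∈ I | blockClass K M t ∈ R} ≤ #{t ∈ I | blockClass K M t ∈ R ∧ t ∉ X} + #X := by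
    rw [← Nat.sub_le_iff_le_add]
    refine (le_card_sdiff _ _).trans (card_le_card fun t ht ↦ ?_)
    simp only [mem_sdiff, mem_filter] at ht ⊢
    tauto
  have hblocks := card_mul_sub_le_card_filter_blockClass hK hR (f u) (f w + E)
  have hcast : ((f w + E - f u : ℕ) : ℝ) = f w - f u + E := by
    rw [Nat.cast_sub (by omega)]; push_cast; ring
  have huw' : (0 : ℝ) ≤ f w - f u := sub_nonneg.2 (mod_cast huw)
  have hM' : (0 : ℝ) < M := mod_cast hM
  rw [← Nat.cast_le (α := ℝ)] at havoid hblocks ⊢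
  push_cast [hcast] at havoid hblocks
  refine (hwin u hu w hw huw).trans (le_of_mul_le_mul_left ?_ hM')
  linarith [mul_le_mul_of_nonneg_right hα huw', mul_le_mul_of_nonneg_left havoid hM'.le]

end Blocks

section Core

variable {V : Type*} (G : SimpleGraph V) [DecidableRel G.Adj]

/-- The number of neighbours of `v` in `X`. -/
def degIn (X : Finset V) (v : V) : ℕ :=
  #{u ∈ X | G.Adj v u}

lemma degIn_mono {X Y : Finset V} (h : X ⊆ Y) (v : V) : degIn G X v ≤ degIn G Y v :=
  card_le_card (filter_subset_filter _ h)

lemma degIn_sdiff_add_degIn [DecidableEq V] {X Y : Finset V} (h : X ⊆ Y) (v : V) :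
    degIn G (Y \ X) v + degIn G X v = degIn G Y v := by
  simp only [degIn, card_filter]
  exact sum_sdiff h

lemma degIn_le_add_of_subset_union [DecidableEq V] {X Y Z : Finset V} (h : X ⊆ Y ∪ Z) (v : V) :
    degIn G X v ≤ degIn G Y v + degIn G Z v := by
  refine (degIn_mono G h v).trans ?_
  rw [degIn, filter_union]
  exact card_union_le _ _

lemma sum_degIn_comm (X Y : Finset V) : ∑ v ∈ X, degIn G Y v = ∑ v ∈ Y, degIn G X v := by
  simp only [degIn, card_filter]
  rw [sum_comm]
  simp only [G.adj_comm]

lemma degIn_le_degree [Fintype V] (X : Finset V) (v : V) : degIn G X v ≤ G.degree v := by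
  rw [← G.card_neighborFinset_eq_degree, G.neighborFinset_eq_filter]
  exact degIn_mono G (subset_univ X) v

/-- The sum of the degrees of the vertices of `X`. -/
def volume [Fintype V] (X : Finset V) : ℕ :=
  ∑ v ∈ X, G.degree v

lemma sum_degIn_le_volume [Fintype V] (X Y : Finset V) :
    ∑ v ∈ X, degIn G Y v ≤ volume G Y :=
  (sum_degIn_comm G X Y).trans_le (sum_le_sum fun v _ ↦ degIn_le_degree G X v)

lemma card_mul_le_volume [Fintype V] {δ : ℕ} (hδ : ∀ v, δ ≤ G.degree v) (X : Finset V) :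
    #X * δ ≤ volume G X :=
  card_nsmul_le_sum _ _ _ fun v _ ↦ hδ v

lemma sum_degIn_eq_of_subset [DecidableEq V] {X W : Finset V} (h : X ⊆ W) :
    ∑ v ∈ W, degIn G W v =
      ∑ v ∈ X, degIn G X v + (∑ v ∈ W \ X, degIn G X v + ∑ v ∈ W \ X, degIn G W v) := by
  rw [sum_degIn_comm G (W \ X) X, ← add_assoc, ← sum_add_distrib, ← sum_sdiff h, add_comm]
  congr 1
  exact sum_congr rfl fun v _ ↦ by rw [add_comm, degIn_sdiff_add_degIn G h]

-- A maximiser of `e(X) - (1/2) ∑ v ∈ X, h v`, with `e` counting ordered pairs.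
lemma exists_core [DecidableEq V] (W : Finset V) (h : V → ℝ) :
    ∃ X ⊆ W, (∀ v ∈ X, h v / 4 ≤ degIn G X v) ∧
      2 * ∑ v ∈ W \ X, (degIn G W v : ℝ) ≤ ∑ v ∈ W \ X, h v := by
  let potential (X : Finset V) : ℝ := ∑ v ∈ X, (degIn G X v : ℝ) - (∑ v ∈ X, h v) / 2
  have hgain {Y Z : Finset V} (hYZ : Y ⊆ Z) : potential Z = potential Y +
      (∑ v ∈ Z \ Y, (degIn G Y v : ℝ) + ∑ v ∈ Z \ Y, (degIn G Z v : ℝ)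
        - (∑ v ∈ Z \ Y, h v) / 2) := by
    have hedges : ∑ v ∈ Z, (degIn G Z v : ℝ) = ∑ v ∈ Y, (degIn G Y v : ℝ) +
        (∑ v ∈ Z \ Y, (degIn G Y v : ℝ) + ∑ v ∈ Z \ Y, (degIn G Z v : ℝ)) :=
      mod_cast sum_degIn_eq_of_subset G hYZ
    simp only [potential, hedges, ← sum_sdiff hYZ (f := h)]
    ring
  obtain ⟨X, hX, hmax⟩ := exists_max_image W.powerset potential ⟨W, mem_powerset_self W⟩
  rw [mem_powerset] at hX
  refine ⟨X, hX, fun v hv ↦ ?_, ?_⟩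
  · have := hmax (X.erase v) (mem_powerset.2 ((erase_subset v X).trans hX))
    rw [hgain (erase_subset v X), sdiff_erase_self hv] at this
    simp only [sum_singleton] at this
    have hmono : (degIn G (X.erase v) v : ℝ) ≤ degIn G X v :=
      mod_cast degIn_mono G (erase_subset v X) v
    linarith
  · have := hmax W (mem_powerset_self W)
    rw [hgain hX, ← sum_add_distrib] at this
    have hmono : ∑ v ∈ W \ X, (degIn G W v : ℝ) ≤
        ∑ v ∈ W \ X, ((degIn G X v : ℝ) + degIn G W v) :=
      sum_le_sum fun v _ ↦ le_add_of_nonneg_left (Nat.cast_nonneg _)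
    linarith

lemma degIn_between [DecidableEq V] {C D : Finset V} (hCD : Disjoint C D) (X : Finset V) {v : V}
    (hv : v ∈ C) : degIn (G.between C D) X v = degIn G (D ∩ X) v := by
  have hvD : v ∉ D := disjoint_left.1 hCD hv
  rw [degIn, degIn]
  congr 1
  ext u
  simp only [mem_filter, mem_inter, SimpleGraph.between_adj, mem_coe, hv, hvD]
  tauto

variable [Fintype V] [DecidableEq V] {C D Bad : Finset V} {q p : ℝ}

lemma exists_bipartite_core (hCD : Disjoint C D) (hqp : q ≤ p)
    (hD : ∀ v ∉ Bad, q * G.degree v / 2 ≤ degIn G D v)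
    (hC : ∀ v ∉ Bad, p * G.degree v / 2 ≤ degIn G C v) :
    ∃ X ⊆ (C ∪ D) \ Bad, (∀ c ∈ C ∩ X, q * G.degree c / 8 ≤ degIn G (D ∩ X) c) ∧
      (∀ d ∈ D ∩ X, p * G.degree d / 8 ≤ degIn G (C ∩ X) d) ∧
      q * volume G (((C ∪ D) \ Bad) \ X) ≤ 4 * volume G Bad := by
  let H := G.between C D
  let demand (v : V) : ℝ := (if v ∈ C then q else p) * G.degree v / 2
  have hHC {c : V} (hc : c ∈ C) (Y : Finset V) : degIn H Y c = degIn G (D ∩ Y) c :=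
    degIn_between G hCD Y hc
  have hHD {d : V} (hd : d ∈ D) (Y : Finset V) : degIn H Y d = degIn G (C ∩ Y) d := by
    simpa only [H, SimpleGraph.between_comm] using degIn_between G hCD.symm Y hd
  obtain ⟨X, hX, hdeg, hrest⟩ := exists_core H ((C ∪ D) \ Bad) demand
  set W := (C ∪ D) \ Bad
  refine ⟨X, hX, fun c hc ↦ ?_, fun d hd ↦ ?_, ?_⟩
  · have := hdeg c (mem_inter.1 hc).2
    rw [hHC (mem_inter.1 hc).1] at this
    simp only [demand, if_pos (mem_inter.1 hc).1] at this
    linarith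
  · have := hdeg d (mem_inter.1 hd).2
    rw [hHD (mem_inter.1 hd).1] at this
    simp only [demand, if_neg (disjoint_right.1 hCD (mem_inter.1 hd).1)] at this
    linarith
  · have hdemand : ∀ v ∈ W \ X, demand v ≤ degIn H W v + degIn G Bad v := by
      intro v hv
      obtain ⟨hvCD, hvBad⟩ := mem_sdiff.1 (mem_sdiff.1 hv).1
      by_cases hvC : v ∈ C
      · simp only [demand, if_pos hvC, hHC hvC]
        exact (hD v hvBad).trans (mod_cast degIn_le_add_of_subset_union G (by grind) v)
      · simp only [demand, if_neg hvC, hHD ((mem_union.1 hvCD).resolve_left hvC)]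
        exact (hC v hvBad).trans (mod_cast degIn_le_add_of_subset_union G (by grind) v)
    have hsum := sum_le_sum hdemand
    rw [sum_add_distrib] at hsum
    have hBad : ∑ v ∈ W \ X, (degIn G Bad v : ℝ) ≤ volume G Bad :=
      mod_cast sum_degIn_le_volume G _ Bad
    have hvolume : q * volume G (W \ X) ≤ 2 * ∑ v ∈ W \ X, demand v := by
      rw [volume, Nat.cast_sum, mul_sum, mul_sum]
      refine sum_le_sum fun v _ ↦ ?_
      have : q ≤ if v ∈ C then q else p := by split_ifs <;> simp [hqp]
      have := mul_le_mul_of_nonneg_right this (Nat.cast_nonneg (α := ℝ) (G.degree v))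
      simp only [demand]
      linarith
    linarith

lemma card_mul_le_of_degIn_lt {δ : ℕ} (hδ : ∀ v, δ ≤ G.degree v) (hq : 0 ≤ q)
    {D' S R : Finset V} (hR : D ⊆ D' ∪ R)
    (hSD : ∀ v ∈ S, q * G.degree v / 2 ≤ degIn G D v)
    (hSD' : ∀ v ∈ S, degIn G D' v ≤ q * G.degree v / 8) :
    3 * (#S * (q * δ)) ≤ 8 * volume G R := by
  have hlower : ∀ v ∈ S, 3 * (q * δ) / 8 ≤ degIn G R v := by
    intro v hv
    have hsplit : (degIn G D v : ℝ) ≤ degIn G D' v + degIn G R v :=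
      mod_cast degIn_le_add_of_subset_union G hR v
    have hqδ := mul_le_mul_of_nonneg_left (Nat.cast_le (α := ℝ).2 (hδ v)) hq
    linarith [hSD v hv, hSD' v hv]
  have hupper : ∑ v ∈ S, (degIn G R v : ℝ) ≤ volume G R := mod_cast sum_degIn_le_volume G S R
  have := (card_nsmul_le_sum S _ _ hlower).trans hupper
  rw [nsmul_eq_mul] at this
  linarith

lemma add_add_mul_sq_le {b r s d B R : ℝ} (hq : 0 < q) (hq₁ : q ≤ 1) (hB : 0 ≤ B)
    (hb : b * d ≤ B) (hr : r * d ≤ R) (hs : 3 * (s * (q * d)) ≤ 8 * (B + R))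
    (hR : q * R ≤ 4 * B) : (b + r + s) * (q ^ 2 * d) ≤ 20 * B := by
  have hs' : s * (q * d) ≤ 8 / 3 * (B + R) := by linarith
  calc (b + r + s) * (q ^ 2 * d) = q ^ 2 * (b * d) + q * (q * (r * d)) + q * (s * (q * d)) := by
        ring
    _ ≤ q ^ 2 * B + q * (q * R) + q * (8 / 3 * (B + R)) := by gcongr
    _ = q ^ 2 * B + 8 / 3 * (q * B) + (q + 8 / 3) * (q * R) := by ring
    _ ≤ q ^ 2 * B + 8 / 3 * (q * B) + (q + 8 / 3) * (4 * B) := by gcongr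
    _ ≤ 1 ^ 2 * B + 8 / 3 * (1 * B) + (1 + 8 / 3) * (4 * B) := by gcongr
    _ ≤ 20 * B := by linarith

lemma exists_core_partition (hCD : Disjoint C D) (hq : 0 < q) (hq₁ : q ≤ 1) (hqp : q ≤ p)
    {δ : ℕ} (hδ : ∀ v, δ ≤ G.degree v)
    (hD : ∀ v ∉ Bad, q * G.degree v / 2 ≤ degIn G D v)
    (hC : ∀ v ∉ Bad, p * G.degree v / 2 ≤ degIn G C v) :
    ∃ A' C' D' : Finset V, A' ⊆ (C ∪ D)ᶜ ∧ C' ⊆ C ∧ D' ⊆ D ∧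
      (∀ v ∈ A' ∪ C', v ∉ Bad ∧ q * G.degree v / 8 ≤ degIn G D' v) ∧
      (∀ d ∈ D', p * G.degree d / 8 ≤ degIn G C' d) ∧
      #(A' ∪ C' ∪ D')ᶜ * (q ^ 2 * δ) ≤ 20 * volume G Bad := by
  obtain ⟨X, hX, hCX, hDX, hvolume⟩ := exists_bipartite_core G hCD hqp hD hC
  let R := ((C ∪ D) \ Bad) \ X
  let A' := {v ∈ (C ∪ D)ᶜ \ Bad | q * G.degree v / 8 ≤ degIn G (D ∩ X) v}
  let S := {v ∈ (C ∪ D)ᶜ \ Bad | ¬ q * G.degree v / 8 ≤ degIn G (D ∩ X) v}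
  refine ⟨A', C ∩ X, D ∩ X, by grind, inter_subset_left, inter_subset_left, ?_, hDX, ?_⟩
  · intro v hv
    rcases mem_union.1 hv with hv | hv
    · exact ⟨(mem_sdiff.1 (mem_filter.1 hv).1).2, (mem_filter.1 hv).2⟩
    · exact ⟨(mem_sdiff.1 (hX (mem_inter.1 hv).2)).2, hCX v hv⟩
  have hcard : #(A' ∪ C ∩ X ∪ D ∩ X)ᶜ ≤ #Bad + #R + #S := by
    refine (card_le_card (t := Bad ∪ R ∪ S) fun v hv ↦ ?_).trans
      ((card_union_le _ _).trans (Nat.add_le_add_right (card_union_le _ _) _))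
    grind [mem_compl]
  have hS : 3 * (#S * (q * δ)) ≤ 8 * volume G (Bad ∪ R) :=
    card_mul_le_of_degIn_lt G hδ hq.le (D := D) (D' := D ∩ X) (by grind)
      (fun v hv ↦ hD v (by grind)) (fun v hv ↦ (not_le.1 (mem_filter.1 hv).2).le)
  have hunion : (volume G (Bad ∪ R) : ℝ) ≤ volume G Bad + volume G R := by
    have := sum_union_inter (s₁ := Bad) (s₂ := R) (f := fun v ↦ G.degree v)
    exact_mod_cast (Nat.le_add_right _ _).trans this.le
  have hBadδ : (#Bad * δ : ℝ) ≤ volume G Bad := mod_cast card_mul_le_volume G hδ Bad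
  have hRδ : (#R * δ : ℝ) ≤ volume G R := mod_cast card_mul_le_volume G hδ R
  calc (#(A' ∪ C ∩ X ∪ D ∩ X)ᶜ : ℝ) * (q ^ 2 * δ) ≤ (#Bad + #R + #S : ℝ) * (q ^ 2 * δ) := by
        gcongr
        exact_mod_cast hcard
    _ ≤ 20 * (volume G Bad : ℝ) :=
      add_add_mul_sq_le hq hq₁ (Nat.cast_nonneg _) hBadδ hRδ (hS.trans (by gcongr)) hvolume

end Core

section Transfer

variable {V : Type*} [DecidableEq V]

section CollisionsAt

variable {α : Type*} [DecidableEq α]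

/-- The pairs of `T` in a collision of `w` at least one member of which is `a` or `b`. -/
def collisionsAt (T : Finset V) (w : V → α) (a b : V) :
    Finset (V × V) :=
  {p ∈ collisions T w | p.1 ∈ s(a, b) ∨ p.2 ∈ s(a, b)}

lemma card_offDiag_meeting_le (T : Finset V) (a b : V) :
    #{p ∈ T.offDiag | p.1 ∈ s(a, b) ∨ p.2 ∈ s(a, b)} ≤ 4 * #T := by
  have hsub : {p ∈ T.offDiag | p.1 ∈ s(a, b) ∨ p.2 ∈ s(a, b)} ⊆
      (({a, b} : Finset V) ×ˢ T) ∪ (T ×ˢ ({a, b} : Finset V)) := by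
    intro p hp
    simp only [mem_filter, mem_offDiag, Sym2.mem_iff] at hp
    simp only [mem_union, mem_product, mem_insert, mem_singleton]
    tauto
  have hpair : #({a, b} : Finset V) ≤ 2 := card_le_two
  calc _ ≤ #({a, b} : Finset V) * #T + #T * #({a, b} : Finset V) := by
        simpa only [card_product] using (card_le_card hsub).trans (card_union_le _ _)
    _ ≤ 2 * #T + #T * 2 := by gcongr
    _ = 4 * #T := by ring

lemma two_mul_card_filter_eq_le {T : Finset V} (w : V → α) {a : V} (ha : a ∈ T) (b : V) :
    2 * #{u ∈ T | u ≠ a ∧ w u = w a} ≤ #(collisionsAt T w a b) := by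
  set U := {u ∈ T | u ≠ a ∧ w u = w a} with hU
  have hsub : (U ×ˢ {a}) ∪ ({a} ×ˢ U) ⊆ collisionsAt T w a b := by
    intro p hp
    simp only [mem_union, mem_product, mem_singleton, hU, mem_filter] at hp
    simp only [collisionsAt, collisions, mem_filter, mem_offDiag, Sym2.mem_iff]
    grind
  have hdisj : Disjoint (U ×ˢ {a}) ({a} ×ˢ U) := by
    rw [disjoint_left]
    grind
  have := card_le_card hsub
  rw [card_union_of_disjoint hdisj, card_product, card_product, card_singleton] at this
  omega

end CollisionsAt

variable {R : Type*} [AddCommGroup R]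

/-- The labelling obtained from `γ` by moving `t` from the vertex `b` to the vertex `a`. -/
def transfer (γ : V → R) (a b : V) (t : R) : V → R :=
  γ + (Pi.single a t - Pi.single b t)

lemma transfer_left (γ : V → R) {a b : V} (hab : a ≠ b) (t : R) :
    transfer γ a b t a = γ a + t := by
  simp [transfer, hab]

lemma transfer_right (γ : V → R) {a b : V} (hab : a ≠ b) (t : R) :
    transfer γ a b t b = γ b - t := by
  simp [transfer, hab.symm, sub_eq_add_neg]

lemma transfer_of_notMem (γ : V → R) {a b u : V} (hu : u ∉ s(a, b)) (t : R) :
    transfer γ a b t u = γ u := by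
  obtain ⟨hua, hub⟩ : u ≠ a ∧ u ≠ b := by simpa using hu
  simp [transfer, hua, hub]

lemma eq_of_transfer_eq_transfer {γ : V → R} {a b u v : V} (hab : a ≠ b) (hu : u ∈ s(a, b))
    (hv : v ∉ s(a, b)) {t t' : R} (ht : transfer γ a b t u = transfer γ a b t v)
    (ht' : transfer γ a b t' u = transfer γ a b t' v) : t = t' := by
  rw [transfer_of_notMem γ hv] at ht ht'
  rcases Sym2.mem_iff.1 hu with rfl | rfl
  · simpa only [transfer_left γ hab, add_right_inj] using ht.trans ht'.symm
  · simpa only [transfer_right γ hab, sub_right_inj] using ht.trans ht'.symm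

variable {I : Type*} [Fintype I]

/-- The labelling obtained from `γ` by moving `x i` from `b i` to `a i` for every `i`. -/
def transfers (γ : V → R) (a b : I → V) (x : I → R) : V → R :=
  γ + ∑ i, (Pi.single (a i) (x i) - Pi.single (b i) (x i))

lemma transfers_update_add [DecidableEq I] (γ : V → R) (a b : I → V) (x : I → R) (i : I) (t : R) :
    transfers γ a b (Function.update x i (x i + t)) =
      transfer (transfers γ a b x) (a i) (b i) t := by
  simp only [transfers, transfer]
  rw [← add_sum_erase univ _ (mem_univ i), ← add_sum_erase univ (fun j ↦ _ - _) (mem_univ i),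
    Function.update_self, sum_congr rfl fun j hj ↦ by
      rw [Function.update_of_ne (ne_of_mem_erase hj)], Pi.single_add, Pi.single_add]
  abel

variable [DecidableEq R]

lemma card_collisions_transfer_add (T : Finset V) (γ : V → R) (a b : V) (t : R) :
    #(collisions T (transfer γ a b t)) + #(collisionsAt T γ a b) =
      #(collisions T γ) + #(collisionsAt T (transfer γ a b t) a b) := by
  have hrest : {p ∈ collisions T (transfer γ a b t) | ¬(p.1 ∈ s(a, b) ∨ p.2 ∈ s(a, b))} =
      {p ∈ collisions T γ | ¬(p.1 ∈ s(a, b) ∨ p.2 ∈ s(a, b))} := by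
    simp only [collisions, filter_filter]
    refine filter_congr fun p _ ↦ and_congr_left fun hp ↦ ?_
    rw [not_or] at hp
    rw [transfer_of_notMem γ hp.1, transfer_of_notMem γ hp.2]
  have h₁ := card_filter_add_card_filter_not (s := collisions T γ)
    (fun p ↦ p.1 ∈ s(a, b) ∨ p.2 ∈ s(a, b))
  have h₂ := card_filter_add_card_filter_not (s := collisions T (transfer γ a b t))
    (fun p ↦ p.1 ∈ s(a, b) ∨ p.2 ∈ s(a, b))
  rw [hrest] at h₂
  simp only [collisionsAt]
  omega

variable [Fintype R]

lemma card_transfer_eq_le (γ : V → R) {a b : V} (hab : a ≠ b) {p : V × V} (hp : p.1 ≠ p.2)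
    (hpab : p.1 ∈ s(a, b) ∨ p.2 ∈ s(a, b)) :
    #{t | transfer γ a b t p.1 = transfer γ a b t p.2} ≤
      1 + if p ∈ ({(a, b), (b, a)} : Finset (V × V)) then Fintype.card R else 0 := by
  split_ifs with hboth
  · exact (card_le_univ _).trans (Nat.le_add_left _ _)
  refine card_le_one.2 fun t ht t' ht' ↦ ?_
  rw [mem_filter_univ] at ht ht'
  obtain ⟨u, v⟩ := p
  have hnot : ¬(u ∈ s(a, b) ∧ v ∈ s(a, b)) := by grind
  rcases hpab with hu | hv
  · exact eq_of_transfer_eq_transfer hab hu (fun hv ↦ hnot ⟨hu, hv⟩) ht ht'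
  · exact eq_of_transfer_eq_transfer hab hv (fun hu ↦ hnot ⟨hu, hv⟩) ht.symm ht'.symm

lemma sum_card_collisionsAt_transfer_le (T : Finset V) (γ : V → R) {a b : V} (hab : a ≠ b) :
    ∑ t, #(collisionsAt T (transfer γ a b t) a b) ≤ 4 * #T + 2 * Fintype.card R := by
  let pairs : Finset (V × V) := {p ∈ T.offDiag | p.1 ∈ s(a, b) ∨ p.2 ∈ s(a, b)}
  calc ∑ t, #(collisionsAt T (transfer γ a b t) a b)
      = ∑ p ∈ pairs, #{t | transfer γ a b t p.1 = transfer γ a b t p.2} := by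
        simp only [collisionsAt, collisions, pairs, filter_comm, card_filter]
        exact sum_comm
    _ ≤ ∑ p ∈ pairs,
          (1 + if p ∈ ({(a, b), (b, a)} : Finset (V × V)) then Fintype.card R else 0) := by
        refine sum_le_sum fun p hp ↦ ?_
        obtain ⟨hp, hpab⟩ := mem_filter.1 hp
        exact card_transfer_eq_le γ hab (mem_offDiag.1 hp).2.2 hpab
    _ = #pairs + #(pairs ∩ {(a, b), (b, a)}) * Fintype.card R := by
        rw [sum_add_distrib, sum_ite_mem, sum_const, sum_const, smul_eq_mul, smul_eq_mul, mul_one]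
    _ ≤ 4 * #T + 2 * Fintype.card R := by
        gcongr
        · exact card_offDiag_meeting_le T a b
        · exact (card_le_card inter_subset_right).trans card_le_two

-- Average over `t`: a pair involving exactly one of `a`, `b` collides for at most one `t`.
lemma card_mul_card_filter_eq_le_of_forall_transfer {T : Finset V} {γ : V → R} {a b : V}
    (hab : a ≠ b) (ha : a ∈ T)
    (hmin : ∀ t, #(collisions T γ) ≤ #(collisions T (transfer γ a b t))) :
    Fintype.card R * #{u ∈ T | u ≠ a ∧ γ u = γ a} ≤ 2 * #T + Fintype.card R := by
  have hle : ∀ t, #(collisionsAt T γ a b) ≤ #(collisionsAt T (transfer γ a b t) a b) := by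
    intro t
    have := card_collisions_transfer_add T γ a b t
    have := hmin t
    omega
  have haverage : Fintype.card R * #(collisionsAt T γ a b) ≤ 4 * #T + 2 * Fintype.card R := calc
    _ = ∑ _t : R, #(collisionsAt T γ a b) := by rw [sum_const, card_univ, smul_eq_mul]
    _ ≤ _ := (sum_le_sum fun t _ ↦ hle t).trans (sum_card_collisionsAt_transfer_le T γ hab)
  have := Nat.mul_le_mul_left (Fintype.card R) (two_mul_card_filter_eq_le γ ha b)
  linarith

lemma exists_transfers_card_filter_eq_le (T : Finset V) (γ : V → R) (a b : I → V) :
    ∃ x : I → R, ∀ i, a i ≠ b i → a i ∈ T →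
      Fintype.card R * #{u ∈ T | u ≠ a i ∧ transfers γ a b x u = transfers γ a b x (a i)} ≤
        2 * #T + Fintype.card R := by
  classical
  obtain ⟨x, -, hx⟩ := exists_min_image univ (fun x : I → R ↦ #(collisions T (transfers γ a b x)))
    univ_nonempty
  refine ⟨x, fun i hab ha ↦ card_mul_card_filter_eq_le_of_forall_transfer hab ha fun t ↦ ?_⟩
  rw [← transfers_update_add]
  exact hx _ (mem_univ _)

end Transfer

section EdgeShift

variable {V : Type*} {G : SimpleGraph V} {X C D P T : Finset V} {φ ψ χ : V → V → ℤ}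

/-- `φ c d` is an amount to be added to the edge joining `c ∈ X` to `d ∈ D`;
it vanishes unless `c` and `d` are adjacent. -/
def IsEdgeShift (G : SimpleGraph V) (X D : Finset V) (φ : V → V → ℤ) : Prop :=
  ∀ c d, φ c d ≠ 0 → c ∈ X ∧ d ∈ D ∧ G.Adj c d

namespace IsEdgeShift

lemma eq_zero_of_notMem_left (h : IsEdgeShift G X D φ) {c : V} (hc : c ∉ X) (d : V) :
    φ c d = 0 :=
  of_not_not fun hφ ↦ hc (h c d hφ).1

lemma eq_zero_of_notMem_right (h : IsEdgeShift G X D φ) (c : V) {d : V} (hd : d ∉ D) :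
    φ c d = 0 :=
  of_not_not fun hφ ↦ hd (h c d hφ).2.1

lemma mono (h : IsEdgeShift G C D φ) (hCX : C ⊆ X) : IsEdgeShift G X D φ :=
  fun c d hφ ↦ ⟨hCX (h c d hφ).1, (h c d hφ).2⟩

lemma add (hφ : IsEdgeShift G X D φ) (hψ : IsEdgeShift G X D ψ) : IsEdgeShift G X D (φ + ψ) := by
  intro c d h
  by_cases hc : φ c d = 0
  · exact hψ c d fun hd ↦ h (by simp [hc, hd])
  · exact hφ c d hc

lemma const_mul (h : IsEdgeShift G X D φ) (k : ℤ) : IsEdgeShift G X D fun c d ↦ k * φ c d :=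
  fun c d hφ ↦ h c d (right_ne_zero_of_mul hφ)

end IsEdgeShift

lemma exists_sum_eq_of_le_card_mul (s : Finset V) (K : ℕ) {a : ℕ}
    (ha : a ≤ #s * K) : ∃ g : V → ℕ, (∀ v, g v ≤ K) ∧ ∑ v ∈ s, g v = a := by
  classical
  induction s using Finset.induction_on generalizing a with
  | empty => exact ⟨0, by simp, by simpa [eq_comm] using ha⟩
  | insert v s hv ih =>
    rw [card_insert_of_notMem hv, add_mul, one_mul] at ha
    obtain ⟨g, hg, hsum⟩ := ih (a := a - min a K) (by omega)
    refine ⟨Function.update g v (min a K), fun u ↦ ?_, ?_⟩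
    · rcases eq_or_ne u v with rfl | huv
      · simp
      · simpa [huv] using hg u
    · rw [sum_insert hv, Function.update_self, sum_update_of_notMem hv, hsum]
      omega

lemma exists_perm_apply_ne_iff [Finite V] {s : Finset V} (hs : 2 ≤ #s) :
    ∃ σ : Equiv.Perm V, ∀ v, σ v ≠ v ↔ v ∈ s := by
  classical
  have := Fintype.ofFinite V
  obtain ⟨σ, hσ, hsupp⟩ := s.exists_cycleOn
  exact ⟨σ, fun v ↦ ⟨fun hv ↦ hsupp (Equiv.Perm.mem_support.2 hv),
    hσ.apply_ne (one_lt_card_iff_nontrivial.1 hs)⟩⟩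

variable [Fintype V] [DecidableRel G.Adj] {K : ℕ}

lemma exists_isEdgeShift_sum_eq {a : V → ℕ} (ha : ∀ v ∈ X, a v ≤ degIn G D v * K) :
    ∃ φ, IsEdgeShift G X D φ ∧ (∀ c d, 0 ≤ φ c d ∧ φ c d ≤ K) ∧
      ∀ v ∈ X, ∑ d, φ v d = a v := by
  classical
  have hrow (v : V) : ∃ g : V → ℕ, (∀ d, g d ≤ K) ∧
      (v ∈ X → ∑ d ∈ D with G.Adj v d, g d = a v) := by
    by_cases hv : v ∈ X
    · obtain ⟨g, hg, hsum⟩ := exists_sum_eq_of_le_card_mul _ K (ha v hv)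
      exact ⟨g, hg, fun _ ↦ hsum⟩
    · exact ⟨0, by simp, fun h ↦ absurd h hv⟩
  choose g hg hsum using hrow
  refine ⟨fun c d ↦ if c ∈ X ∧ d ∈ D ∧ G.Adj c d then (g c d : ℤ) else 0, fun c d h ↦ ?_,
    fun c d ↦ ?_, fun v hv ↦ ?_⟩
  · exact of_not_not fun hcd ↦ h (if_neg hcd)
  · have : (g c d : ℤ) ≤ K := mod_cast hg c d
    dsimp only
    split_ifs <;> omega
  · simp only [hv, true_and, ← sum_filter]
    rw [← hsum v hv, Nat.cast_sum]
    exact sum_congr (by ext; simp) fun _ _ ↦ rfl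

variable [DecidableEq V]

lemma sum_perm_single_sub_single {R : Type*} [AddCommGroup R] (σ : V → Equiv.Perm V)
    (x : V × V → R) (u : V) :
    (∑ p : V × V, (Pi.single p.2 (x p) - Pi.single (σ p.1 p.2) (x p) : V → R)) u =
      ∑ c, (x (c, u) - x (c, (σ c).symm u)) := by
  rw [Finset.sum_apply, Fintype.sum_prod_type]
  refine sum_congr rfl fun c _ ↦ ?_
  simp only [Pi.sub_apply, Pi.single_apply, sum_sub_distrib]
  congr 1
  · simp
  · simp_rw [← Equiv.symm_apply_eq]
    simp

-- Along a derangement of the neighbours of `c` in `D`, each `d` passes an amount to its successor,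
-- so that the sums at `c` do not change.
lemma exists_isEdgeShift_card_modEq_le (hK : 0 < K) (hDT : D ⊆ T) (g : V → ℤ)
    (hC : ∀ c ∈ C, 2 ≤ degIn G D c) (hD : ∀ d ∈ D, 0 < degIn G C d) :
    ∃ φ, IsEdgeShift G C D φ ∧ (∀ c d, |φ c d| ≤ K) ∧ (∀ c, ∑ d, φ c d = 0) ∧
      ∀ d ∈ D, K * #{u ∈ T | u ≠ d ∧ g u + ∑ c, φ c u ≡ g d + ∑ c, φ c d [ZMOD K]} ≤
        2 * #T + K := by
  have : NeZero K := ⟨hK.ne'⟩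
  have hperm (c : V) : ∃ σ : Equiv.Perm V, ∀ d, σ d ≠ d ↔ c ∈ C ∧ d ∈ D ∧ G.Adj c d := by
    by_cases hc : c ∈ C
    · obtain ⟨σ, hσ⟩ := exists_perm_apply_ne_iff (hC c hc)
      exact ⟨σ, fun d ↦ by simp [hσ, hc]⟩
    · exact ⟨1, fun d ↦ by simp [hc]⟩
  choose σ hσ using hperm
  obtain ⟨x, hx⟩ := exists_transfers_card_filter_eq_le T (fun u ↦ (g u : ZMod K))
    (fun p : V × V ↦ p.2) (fun p ↦ σ p.1 p.2)
  let φ (c d : V) : ℤ := (x (c, d)).val - (x (c, (σ c).symm d)).val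
  refine ⟨φ, fun c d hφ ↦ (hσ c d).1 fun hd ↦ hφ ?_, fun c d ↦ ?_, fun c ↦ ?_, fun d hd ↦ ?_⟩
  · simp only [φ, (Equiv.symm_apply_eq _).2 hd.symm, sub_self]
  · have := (x (c, d)).val_lt
    have := (x (c, (σ c).symm d)).val_lt
    grind
  · rw [sum_sub_distrib, Equiv.sum_comp (σ c).symm (fun d ↦ ((x (c, d)).val : ℤ)), sub_self]
  · have hcast (u : V) : ((g u + ∑ c, φ c u : ℤ) : ZMod K) = transfers (fun u ↦ (g u : ZMod K))
        (fun p : V × V ↦ p.2) (fun p ↦ σ p.1 p.2) x u := by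
      rw [transfers, Pi.add_apply, sum_perm_single_sub_single]
      simp [φ]
    obtain ⟨c, hc⟩ := card_pos.1 (hD d hd)
    obtain ⟨hcC, hdc⟩ := mem_filter.1 hc
    have := hx (c, d) ((hσ c d).2 ⟨hcC, hd, hdc.symm⟩).symm (hDT hd)
    simpa only [ZMod.card, ← hcast, ZMod.intCast_eq_intCast_iff] using this

end EdgeShift

section Toggle

lemma exists_emod_eq_notMem {K M : ℕ} (hK : 0 < K) {r : ℕ} (hr : r < M) (base : ℤ)
    (F : Finset ℤ) :
    ∃ m : ℕ, m + 1 ≤ M * (#F + 1) ∧ (base + K * m) / K % M = r ∧ base + K * m ∉ F := by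
  have hM : (0 : ℤ) < M := by omega
  obtain ⟨m₀, hm₀⟩ := Int.eq_ofNat_of_zero_le (Int.emod_nonneg (r - base / K) hM.ne')
  have hm₀M : m₀ < M := by
    have := Int.emod_lt_of_pos (r - base / K) hM
    omega
  let value (j : ℕ) : ℤ := base + K * (m₀ + M * j : ℕ)
  have hinj : Function.Injective value := by
    intro i j hij
    have hmul : K * (m₀ + M * i) = K * (m₀ + M * j) := by
      exact_mod_cast add_left_cancel hij
    have := Nat.add_left_cancel (Nat.eq_of_mul_eq_mul_left hK hmul)
    exact Nat.eq_of_mul_eq_mul_left (by omega) this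
  obtain ⟨_, hv, hvF⟩ := exists_mem_notMem_of_card_lt_card
    (s := F) (t := (range (#F + 1)).image value) (by simp [card_image_of_injective _ hinj])
  obtain ⟨j, hj, rfl⟩ := mem_image.1 hv
  refine ⟨m₀ + M * j, ?_, ?_, hvF⟩
  · have : M * (j + 1) ≤ M * (#F + 1) := Nat.mul_le_mul_left M (mem_range.1 hj)
    rw [mul_add, mul_one] at this
    omega
  · rw [Int.add_mul_ediv_left _ _ (by omega), Nat.cast_add, Nat.cast_mul, ← add_assoc,
      Int.add_mul_emod_self_left]
    rw [← hm₀, Int.add_emod_emod, add_sub_cancel]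
    exact Int.emod_eq_of_lt (by omega) (by omega)

variable {V : Type*} [Fintype V] {G : SimpleGraph V} {C D P T : Finset V}
  {χ : V → V → ℤ} {K M r : ℕ}

/-- `χ` is an edge shift with values in `{-1, 0, 1}` for which every vertex of `C` is shifted
by `0` or `1` in total; the vertices with total `1` are the ones switched on. -/
structure IsToggle (G : SimpleGraph V) (C P : Finset V) (χ : V → V → ℤ) : Prop where
  isEdgeShift : IsEdgeShift G C P χ
  abs_le_one : ∀ c d, |χ c d| ≤ 1
  sum_eq : ∀ c, ∑ d, χ c d = 0 ∨ ∑ d, χ c d = 1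

variable [DecidableEq V] [DecidableRel G.Adj]

-- The edges at `d` are used to switch on exactly the members of a given set of neighbours.
lemma IsToggle.exists_insert (h : IsToggle G C P χ) {d : V} (hd : d ∉ P) {m : ℕ}
    (hm : m ≤ degIn G C d) :
    ∃ χ', IsToggle G C (insert d P) χ' ∧ (∀ c, ∀ u ≠ d, χ' c u = χ c u) ∧
      ∑ c, χ' c d = m - ∑ c ∈ C with G.Adj d c, ∑ u, χ c u := by
  obtain ⟨X, hXN, hX⟩ := exists_subset_card_eq hm
  set N := {c ∈ C | G.Adj d c} with hN
  let new (c : V) : ℤ := if c ∈ N then (if c ∈ X then 1 else 0) - ∑ u, χ c u else 0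
  let χ' (c : V) : V → ℤ := Function.update (χ c) d (new c)
  have hχ'd (c : V) : χ' c d = new c := Function.update_self ..
  have hχ'ne (c u : V) (hu : u ≠ d) : χ' c u = χ c u := Function.update_of_ne hu ..
  refine ⟨χ', ⟨fun c u hcu ↦ ?_, fun c u ↦ ?_, fun c ↦ ?_⟩, hχ'ne, ?_⟩
  · rcases eq_or_ne u d with rfl | hu
    · have hc : c ∈ N := by
        rw [hχ'd] at hcu
        exact of_not_not fun hc ↦ hcu (if_neg hc)
      exact ⟨(mem_filter.1 hc).1, mem_insert_self _ _, (mem_filter.1 hc).2.symm⟩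
    · rw [hχ'ne c u hu] at hcu
      exact (h.isEdgeShift c u hcu).imp_right (And.imp_left mem_insert_of_mem)
  · rcases eq_or_ne u d with rfl | hu
    · rw [hχ'd]
      rcases h.sum_eq c with hc | hc <;> simp only [new, hc] <;> split_ifs <;> simp
    · rw [hχ'ne c u hu]
      exact h.abs_le_one c u
  · have hsum : ∑ u, χ' c u = ∑ u, χ c u + new c := by
      rw [sum_update_of_mem (mem_univ d), ← sum_sdiff (singleton_subset_iff.2 (mem_univ d)),
        sum_singleton, h.isEdgeShift.eq_zero_of_notMem_right c hd]
      ring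
    rw [hsum]
    by_cases hcN : c ∈ N
    · by_cases hcX : c ∈ X <;> simp [new, hcN, hcX]
    · simpa only [new, if_neg hcN, add_zero] using h.sum_eq c
  · simp only [hχ'd, new]
    rw [← sum_filter, filter_univ_mem, sum_sub_distrib, sum_ite_mem, inter_eq_right.2 hXN, ← hX]
    simp

lemma IsToggle.exists_step (hK : 0 < K) (hr : r < M) (g : V → ℤ) (h : IsToggle G C P χ) {d : V}
    (hd : d ∉ P)
    (hdeg : M * (#{u ∈ T | u ≠ d ∧ g u ≡ g d [ZMOD K]} + 1) ≤ degIn G C d + 1) :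
    ∃ χ', IsToggle G C (insert d P) χ' ∧ (∀ c, ∀ u ≠ d, χ' c u = χ c u) ∧
      (g d + K * ∑ c, χ' c d) / K % M = r ∧
      ∀ u ∈ T, u ≠ d → g u + K * ∑ c, χ' c u ≠ g d + K * ∑ c, χ' c d := by
  set rivals := {u ∈ T | u ≠ d ∧ g u ≡ g d [ZMOD K]}
  obtain ⟨m, hm, hmr, hmF⟩ := exists_emod_eq_notMem hK hr
    (g d - K * ∑ c ∈ C with G.Adj d c, ∑ u, χ c u) (rivals.image fun u ↦ g u + K * ∑ c, χ c u)
  have hmdeg : m ≤ degIn G C d := by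
    have := Nat.mul_le_mul_left M (Nat.add_le_add_right
      (card_image_le (s := rivals) (f := fun u ↦ g u + K * ∑ c, χ c u)) 1)
    omega
  obtain ⟨χ', hχ', hne, hsum⟩ := h.exists_insert hd hmdeg
  have hvalue : g d + K * ∑ c, χ' c d =
      g d - K * ∑ c ∈ C with G.Adj d c, ∑ u, χ c u + K * m := by
    rw [hsum]
    ring
  rw [← hvalue] at hmr hmF
  refine ⟨χ', hχ', hne, hmr, fun u hu hud heq ↦ hmF (mem_image.2 ⟨u, ?_, ?_⟩)⟩
  · refine mem_filter.2 ⟨hu, hud, ?_⟩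
    have hmod (v : V) : g v + K * ∑ c, χ' c v ≡ g v [ZMOD K] := by simp [Int.ModEq]
    exact (hmod u).symm.trans (heq ▸ hmod d)
  · simpa only [hne _ u hud] using heq

lemma exists_isToggle (hK : 0 < K) (hr : r < M) (hDT : D ⊆ T) (g : V → ℤ)
    (hdeg : ∀ d ∈ D, M * (#{u ∈ T | u ≠ d ∧ g u ≡ g d [ZMOD K]} + 1) ≤ degIn G C d + 1) :
    ∃ χ, IsToggle G C D χ ∧ ∀ d ∈ D, (g d + K * ∑ c, χ c d) / K % M = r ∧
      ∀ u ∈ T, u ≠ d → g u + K * ∑ c, χ c u ≠ g d + K * ∑ c, χ c d := by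
  induction D using Finset.induction_on with
  | empty => exact ⟨0, ⟨by simp [IsEdgeShift], by simp, by simp⟩, by simp⟩
  | insert d P hd ih =>
    obtain ⟨χ, hχ, hP⟩ := ih ((subset_insert d P).trans hDT)
      fun u hu ↦ hdeg u (mem_insert_of_mem hu)
    obtain ⟨χ', hχ', hne, hmod, hdist⟩ := hχ.exists_step hK hr g hd (hdeg d (mem_insert_self d P))
    refine ⟨χ', hχ', fun v hv ↦ ?_⟩
    rcases mem_insert.1 hv with rfl | hvP
    · exact ⟨hmod, hdist⟩
    have hvd : v ≠ d := ne_of_mem_of_not_mem hvP hd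
    refine ⟨by simpa only [hne _ v hvd] using (hP v hvP).1, fun u hu huv ↦ ?_⟩
    rcases eq_or_ne u d with rfl | hud
    · exact (hdist v (hDT hv) hvd).symm
    · simpa only [hne _ v hvd, hne _ u hud] using (hP v hvP).2 u hu huv

end Toggle

section Assembly

variable {V : Type*} [Fintype V] {G : SimpleGraph V} [DecidableRel G.Adj]
  {A C D X T : Finset V} {K M r : ℕ}

lemma exists_isEdgeShift_distinct (hK : 0 < K) (hr : r < M) (hDT : D ⊆ T) (g : V → ℤ)
    (hC : ∀ c ∈ C, 2 ≤ degIn G D c) (hD : ∀ d ∈ D, M * (2 * #T + 2 * K) ≤ K * degIn G C d) :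
    ∃ ψ, IsEdgeShift G C D ψ ∧ (∀ c d, |ψ c d| ≤ 2 * K) ∧
      (∀ c, ∑ d, ψ c d = 0 ∨ ∑ d, ψ c d = K) ∧
      ∀ d ∈ D, (g d + ∑ c, ψ c d) / K % M = r ∧
        ∀ u ∈ T, u ≠ d → g u + ∑ c, ψ c u ≠ g d + ∑ c, ψ c d := by
  classical
  have hpos : ∀ d ∈ D, 0 < degIn G C d := fun d hd ↦ by
    have : 0 < M * (2 * #T + 2 * K) := Nat.mul_pos (by omega) (by omega)
    exact Nat.pos_of_mul_pos_left (this.trans_le (hD d hd))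
  obtain ⟨φ, hφ, hφK, hφsum, hconf⟩ := exists_isEdgeShift_card_modEq_le hK hDT g hC hpos
  obtain ⟨χ, hχ, hχD⟩ := exists_isToggle (C := C) hK hr hDT (fun u ↦ g u + ∑ c, φ c u)
    fun d hd ↦ by
      refine (Nat.le_of_mul_le_mul_left ?_ hK).trans (Nat.le_succ _)
      refine le_trans ?_ (hD d hd)
      rw [mul_left_comm]
      exact Nat.mul_le_mul_left M (by linarith [hconf d hd])
  refine ⟨φ + fun c d ↦ K * χ c d, hφ.add (hχ.isEdgeShift.const_mul K), fun c d ↦ ?_,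
    fun c ↦ ?_, fun d hd ↦ ?_⟩
  · calc |φ c d + K * χ c d| ≤ |φ c d| + |(K : ℤ) * χ c d| := abs_add_le _ _
      _ ≤ K + K * 1 := by
          rw [abs_mul, Nat.abs_cast]
          gcongr
          exacts [hφK c d, hχ.abs_le_one c d]
      _ = 2 * K := by ring
  · simp only [Pi.add_apply, sum_add_distrib, hφsum, ← mul_sum, zero_add]
    rcases hχ.sum_eq c with hc | hc <;> simp [hc]
  · simpa only [Pi.add_apply, sum_add_distrib, ← mul_sum, ← add_assoc] using hχD d hd

lemma IsEdgeShift.exists_weightedDeg_eq {φ : V → V → ℤ} (h : IsEdgeShift G X D φ)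
    (hXD : Disjoint X D) {k : ℕ} {f₀ : Sym2 V → ℕ} (hf₀ : ∀ e ∈ G.edgeSet, f₀ e ∈ Icc 1 k)
    (hφ : ∀ c d, φ c d ≠ 0 → 1 ≤ f₀ s(c, d) + φ c d ∧ f₀ s(c, d) + φ c d ≤ k) :
    ∃ f : Sym2 V → ℕ, (∀ e ∈ G.edgeSet, f e ∈ Icc 1 k) ∧
      (∀ v ∈ X, (weightedDeg G f v : ℤ) = weightedDeg G f₀ v + ∑ d, φ v d) ∧
      ∀ v ∉ X, (weightedDeg G f v : ℤ) = weightedDeg G f₀ v + ∑ c, φ c v := by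
  let f : Sym2 V → ℕ := Sym2.lift ⟨fun u v ↦ (f₀ s(u, v) + φ u v + φ v u).toNat,
    fun u v ↦ by
      beta_reduce
      rw [Sym2.eq_swap, add_right_comm]⟩
  have hone (u v : V) : φ u v = 0 ∨ φ v u = 0 := by
    by_contra! huv
    exact disjoint_left.1 hXD (h u v huv.1).1 (h v u huv.2).2.1
  have hmem (u v : V) (huv : G.Adj u v) :
      1 ≤ f₀ s(u, v) + φ u v + φ v u ∧ f₀ s(u, v) + φ u v + φ v u ≤ k := by
    have hbase := mem_Icc.1 (hf₀ s(u, v) huv)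
    have huv' := hφ u v
    have hvu' := hφ v u
    rw [Sym2.eq_swap] at hvu'
    grind
  have hf (u v : V) (huv : G.Adj u v) : (f s(u, v) : ℤ) = f₀ s(u, v) + φ u v + φ v u :=
    Int.toNat_of_nonneg (by linarith [hmem u v huv])
  have hsum (v : V) :
      (weightedDeg G f v : ℤ) = weightedDeg G f₀ v + ∑ u, φ v u + ∑ u, φ u v := by
    have hext (ψ : V → ℤ) (hψ : ∀ u, ψ u ≠ 0 → G.Adj v u) :
        ∑ u, ψ u = ∑ u with G.Adj v u, ψ u := (sum_filter_of_ne fun u _ hu ↦ hψ u hu).symm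
    rw [hext (φ v) fun u hu ↦ (h v u hu).2.2, hext (φ · v) fun u hu ↦ (h u v hu).2.2.symm]
    simp only [weightedDeg_eq_sum, Nat.cast_sum, ← sum_add_distrib]
    exact sum_congr rfl fun u hu ↦ hf v u (mem_filter.1 hu).2
  refine ⟨f, fun e ↦ ?_, fun v hv ↦ ?_, fun v hv ↦ ?_⟩
  · induction e using Sym2.ind with
    | _ u v =>
      intro huv
      have := hmem u v huv
      rw [← hf u v huv] at this
      exact mem_Icc.2 (mod_cast this)
  · have : ∑ u, φ u v = 0 :=
      sum_eq_zero fun u _ ↦ h.eq_zero_of_notMem_right u (disjoint_left.1 hXD hv)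
    rw [hsum, this, add_zero]
  · rw [hsum, sum_eq_zero fun u _ ↦ h.eq_zero_of_notMem_left hv u, add_zero]

lemma blockClass_add_self (hK : 0 < K) (hM : 2 ≤ M) {t : ℕ} (ht : blockClass K M t = 0) :
    blockClass K M (t + K) = 1 := by
  rw [blockClass, Nat.add_div_right _ hK, Nat.add_mod, ← blockClass, ht, zero_add, Nat.mod_mod,
    Nat.mod_eq_of_lt hM]

lemma injective_of_blockClass [DecidableEq V] {W t : V → ℕ} (hK : 0 < K) (hM : 2 ≤ M)
    (htA : Set.InjOn t A) (htC : Set.InjOn t C)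
    (hAclass : ∀ v ∈ A, 3 ≤ blockClass K M (t v)) (hCclass : ∀ v ∈ C, blockClass K M (t v) = 0)
    (hDclass : ∀ v ∈ D, blockClass K M (W v) = 2)
    (hWA : ∀ v ∈ A, W v = t v) (hWC : ∀ v ∈ C, W v = t v ∨ W v = t v + K)
    (hWD : ∀ d ∈ D, ∀ u ∉ A ∪ C, u ≠ d → W u ≠ W d) (hWS : Set.InjOn W ↑(A ∪ C ∪ D)ᶜ)
    (hWS' : ∀ v ∈ A ∪ C, ∀ s ∈ (A ∪ C ∪ D)ᶜ, W v ≠ W s) : Function.Injective W := by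
  have hC₁ (v : V) (hv : v ∈ C) : blockClass K M (t v + K) = 1 :=
    blockClass_add_self hK hM (hCclass v hv)
  have hA₃ (v : V) (hv : v ∈ A) : 3 ≤ blockClass K M (W v) := hWA v hv ▸ hAclass v hv
  have hC₀₁ (v : V) (hv : v ∈ C) : blockClass K M (W v) ≤ 1 := by
    rcases hWC v hv with h | h
    · simp [h, hCclass v hv]
    · simp [h, hC₁ v hv]
  have hDnot (v : V) (hv : v ∈ D) : v ∉ A ∪ C := by grind
  have hWC_inj : Set.InjOn W C := by
    intro u hu v hv huv
    have hu₀ := hCclass u hu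
    have hv₀ := hCclass v hv
    have hu₁ := hC₁ u hu
    have hv₁ := hC₁ v hv
    refine htC hu hv ?_
    grind
  have hmixed {u v : V} (huv : W u = W v) (hv : v ∈ (A ∪ C ∪ D)ᶜ) : u ∈ (A ∪ C ∪ D)ᶜ := by
    rw [mem_compl] at hv ⊢
    intro hu
    rcases mem_union.1 hu with hu | hu
    · exact hWS' u hu v (mem_compl.2 hv) huv
    · exact hWD u hu v (by grind) (by grind) huv.symm
  intro u v huv
  by_cases hv : v ∈ (A ∪ C ∪ D)ᶜ
  · exact hWS (hmixed huv hv) hv huv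
  have hu : u ∉ (A ∪ C ∪ D)ᶜ := fun hu ↦ hv (hmixed huv.symm hu)
  rw [mem_compl, not_not, union_assoc, mem_union, mem_union] at hu hv
  rcases hu with hu | hu | hu <;> rcases hv with hv | hv | hv
  case inl.inl => exact htA hu hv (by rw [← hWA u hu, ← hWA v hv, huv])
  case inr.inl.inr.inl => exact hWC_inj hu hv huv
  case inr.inr.inr.inr => exact of_not_not fun hne ↦ hWD v hv u (hDnot u hu) hne huv
  all_goals grind

lemma exists_weightedDeg_eq_targets [DecidableEq V] (hK : 0 < K) (hr : r < M)
    (hAC : Disjoint A C) (hXD : Disjoint (A ∪ C) D)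
    {k : ℕ} {f₀ : Sym2 V → ℕ} (hf₀ : ∀ e ∈ G.edgeSet, f₀ e ∈ Icc 1 k)
    (hf₀D : ∀ v ∈ A ∪ C, ∀ d ∈ D, 1 + 2 * K ≤ f₀ s(v, d) ∧ f₀ s(v, d) + 3 * K ≤ k)
    {t : V → ℕ}
    (ht : ∀ v ∈ A ∪ C, t v ∈ Icc (weightedDeg G f₀ v) (weightedDeg G f₀ v + degIn G D v * K))
    (hCD : ∀ c ∈ C, 2 ≤ degIn G D c)
    (hDC : ∀ d ∈ D, M * (2 * #(A ∪ C)ᶜ + 2 * K) ≤ K * degIn G C d) :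
    ∃ f, (∀ e ∈ G.edgeSet, f e ∈ Icc 1 k) ∧ (∀ v ∈ A, weightedDeg G f v = t v) ∧
      (∀ v ∈ C, weightedDeg G f v = t v ∨ weightedDeg G f v = t v + K) ∧
      (∀ v ∈ (A ∪ C ∪ D)ᶜ, weightedDeg G f v = weightedDeg G f₀ v) ∧
      ∀ d ∈ D, blockClass K M (weightedDeg G f d) = r ∧
        ∀ u ∉ A ∪ C, u ≠ d → weightedDeg G f u ≠ weightedDeg G f d := by
  set w := weightedDeg G f₀
  obtain ⟨φ, hφ, hφK, hφsum⟩ := exists_isEdgeShift_sum_eq (G := G) (X := A ∪ C) (D := D) (K := K)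
    (a := fun v ↦ t v - w v) fun v hv ↦ by have := mem_Icc.1 (ht v hv); grind
  have hDX : D ⊆ (A ∪ C)ᶜ := fun d hd ↦ mem_compl.2 (disjoint_right.1 hXD hd)
  obtain ⟨ψ, hψ, hψK, hψsum, hψD⟩ := exists_isEdgeShift_distinct hK hr hDX
    (fun d ↦ w d + ∑ c, φ c d) hCD hDC
  have hφψ := hφ.add (hψ.mono subset_union_right)
  obtain ⟨f, hfk, hfX, hfX'⟩ := hφψ.exists_weightedDeg_eq hXD hf₀ fun c d hcd ↦ by
    have hc := hφψ c d hcd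
    have := hf₀D c hc.1 d hc.2.1
    have := hφK c d
    have := abs_le.1 (hψK c d)
    simp only [Pi.add_apply]
    grind
  simp only [Pi.add_apply, sum_add_distrib, ← add_assoc] at hfX hfX'
  have hWX (v : V) (hv : v ∈ A ∪ C) : (weightedDeg G f v : ℤ) = t v + ∑ d, ψ v d := by
    have := mem_Icc.1 (ht v hv)
    rw [hfX v hv, hφsum v hv]
    grind
  refine ⟨f, hfk, fun v hv ↦ ?_, fun v hv ↦ ?_, fun v hv ↦ ?_, fun d hd ↦ ?_⟩
  · have := hWX v (mem_union_left C hv)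
    rw [sum_eq_zero fun d _ ↦ hψ.eq_zero_of_notMem_left (disjoint_left.1 hAC hv) d] at this
    exact_mod_cast this
  · have := hWX v (mem_union_right A hv)
    have := hψsum v
    grind
  · have hvD : v ∉ D := by grind [mem_compl]
    have := hfX' v (by grind [mem_compl])
    rw [sum_eq_zero fun c _ ↦ hφ.eq_zero_of_notMem_right c hvD,
      sum_eq_zero fun c _ ↦ hψ.eq_zero_of_notMem_right c hvD] at this
    exact_mod_cast this
  · have hclass := (hψD d hd).1
    rw [← hfX' d (disjoint_right.1 hXD hd)] at hclass
    refine ⟨mod_cast hclass, fun u hu hud ↦ ?_⟩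
    have hdistinct := (hψD d hd).2 u (mem_compl.2 hu) hud
    rw [← hfX' d (disjoint_right.1 hXD hd), ← hfX' u hu] at hdistinct
    exact_mod_cast hdistinct

lemma exists_isIrregularAssignment_of_targets [DecidableEq V] (hK : 0 < K) (hM : 4 ≤ M)
    (hAC : Disjoint A C) (hXD : Disjoint (A ∪ C) D)
    {k : ℕ} {f₀ : Sym2 V → ℕ} (hf₀ : ∀ e ∈ G.edgeSet, f₀ e ∈ Icc 1 k)
    (hf₀D : ∀ v ∈ A ∪ C, ∀ d ∈ D, 1 + 2 * K ≤ f₀ s(v, d) ∧ f₀ s(v, d) + 3 * K ≤ k)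
    (hS : Set.InjOn (weightedDeg G f₀) ↑(A ∪ C ∪ D)ᶜ)
    {t : V → ℕ} (htA : Set.InjOn t A) (htC : Set.InjOn t C)
    (ht : ∀ v ∈ A ∪ C, t v ∈ Icc (weightedDeg G f₀ v) (weightedDeg G f₀ v + degIn G D v * K))
    (hA : ∀ v ∈ A, 3 ≤ blockClass K M (t v)) (hC : ∀ v ∈ C, blockClass K M (t v) = 0)
    (htS : ∀ v ∈ A ∪ C, ∀ s ∈ (A ∪ C ∪ D)ᶜ,
      t v ≠ weightedDeg G f₀ s ∧ (v ∈ C → t v + K ≠ weightedDeg G f₀ s))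
    (hCD : ∀ c ∈ C, 2 ≤ degIn G D c)
    (hDC : ∀ d ∈ D, M * (2 * #(A ∪ C)ᶜ + 2 * K) ≤ K * degIn G C d) :
    ∃ f, IsIrregularAssignment G k f := by
  obtain ⟨f, hfk, hWA, hWC, hWS, hWD⟩ :=
    exists_weightedDeg_eq_targets hK (r := 2) (by omega) hAC hXD hf₀ hf₀D ht hCD hDC
  refine ⟨f, hfk, injective_of_blockClass hK (by omega) htA htC hA hC (fun d hd ↦ (hWD d hd).1)
    hWA hWC (fun d hd ↦ (hWD d hd).2) (fun u hu v hv huv ↦ ?_) (fun v hv s hs ↦ ?_)⟩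
  · exact hS hu hv (by rw [← hWS u hu, ← hWS v hv, huv])
  · rw [hWS s hs]
    have := htS v hv s hs
    rcases mem_union.1 hv with hv | hv
    · rw [hWA v hv]
      exact this.1
    · rcases hWC v hv with h | h <;> rw [h]
      exacts [this.1, this.2 hv]

end Assembly

section BaseWeight

variable {V : Type*}

section Raise

variable [Fintype V] (G : SimpleGraph V) [DecidableRel G.Adj]

lemma weightedDeg_mono {f g : Sym2 V → ℕ} (h : ∀ e, f e ≤ g e) (v : V) :
    weightedDeg G f v ≤ weightedDeg G g v :=
  sum_le_sum fun _ _ ↦ h _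

lemma weightedDeg_le_add {f g : Sym2 V → ℕ} {m : ℕ} (h : ∀ e, g e ≤ f e + m) (v : V) :
    weightedDeg G g v ≤ weightedDeg G f v + G.degree v * m := by
  refine (sum_le_sum fun _ _ ↦ h _).trans_eq ?_
  rw [sum_add_distrib, sum_const, smul_eq_mul, G.card_neighborFinset_eq_degree, weightedDeg]

end Raise

variable [DecidableEq V] (D : Finset V) (x : V → ℕ) (N h K : ℕ)

/-- The initial weighting: an edge avoiding the reservoir `D` is heavy (weight `1 + h`) when the
labels of its endpoints add up to at least `N` and light (weight `1`) otherwise, while the edges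
meeting `D` start at `1 + 2 * K`, which leaves room to lower and to raise them. -/
def baseWeight : Sym2 V → ℕ :=
  Sym2.lift ⟨fun u v ↦ if u ∈ D ∨ v ∈ D then 1 + 2 * K else if N ≤ x u + x v then 1 + h else 1,
    fun u v ↦ by simp only [or_comm, add_comm]⟩

lemma baseWeight_mk (u v : V) : baseWeight D x N h K s(u, v) =
    if u ∈ D ∨ v ∈ D then 1 + 2 * K else if N ≤ x u + x v then 1 + h else 1 :=
  rfl

lemma one_le_baseWeight (e : Sym2 V) : 1 ≤ baseWeight D x N h K e := by
  induction e using Sym2.ind with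
  | _ u v => rw [baseWeight_mk]; split_ifs <;> omega

lemma baseWeight_le_one_add_max (e : Sym2 V) : baseWeight D x N h K e ≤ 1 + max h (2 * K) := by
  induction e using Sym2.ind with
  | _ u v => rw [baseWeight_mk]; split_ifs <;> omega

lemma weightedDeg_baseWeight [Fintype V] (G : SimpleGraph V) [DecidableRel G.Adj] {v : V}
    (hv : v ∉ D) :
    weightedDeg G (baseWeight D x N h K) v = G.degree v +
      h * degIn G {u | u ∉ D ∧ N ≤ x u + x v} v + 2 * K * degIn G D v := by
  have hterm (u : V) : baseWeight D x N h K s(v, u) = 1 +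
      h * (if u ∉ D ∧ N ≤ x u + x v then 1 else 0) + 2 * K * (if u ∈ D then 1 else 0) := by
    rw [baseWeight_mk, add_comm (x v)]
    by_cases hu : u ∈ D <;> simp only [hu, hv] <;> split_ifs <;> grind
  rw [weightedDeg_eq_sum, sum_congr rfl fun u _ ↦ hterm u, sum_add_distrib, sum_add_distrib,
    ← mul_sum, ← mul_sum, ← card_filter, ← card_filter, ← card_eq_sum_ones, filter_comm,
    filter_comm (fun u ↦ G.Adj v u) (· ∈ D), filter_univ_mem, degIn, degIn,
    ← G.card_neighborFinset_eq_degree, SimpleGraph.neighborFinset_eq_filter]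

end BaseWeight

section Parameters

/-- The probability that a random vertex is put into the reservoir `D`. -/
def probD (M : ℕ) : ℝ :=
  1 / (2 ^ 12 * M ^ 2)

/-- The probability that a random vertex is put into the class `C`, whose vertices absorb the
corrections made along the edges between `C` and the reservoir. -/
def probC (M : ℕ) : ℝ :=
  1 / (4 * M)

/-- The number of values taken by the random vertex labels. -/
def gridSize (M : ℕ) : ℕ :=
  2 ^ 27 * M ^ 2

/-- The relative error allowed in every concentration estimate. -/
def tolerance (M : ℕ) : ℝ :=
  1 / gridSize M

/-- The length of the blocks of consecutive integers into which the targets are sorted. -/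
def blockLength (n δ : ℕ) : ℕ :=
  n / (8 * δ) + 1

/-- The excess weight of the heavy edges. -/
def topWeight (n δ M : ℕ) : ℕ :=
  ⌈(n / δ * (1 + 10 / M) : ℝ)⌉₊

/-- The standing size constraints relating the number `n` of vertices, the minimum degree `δ` and
the accuracy parameter `M`. -/
structure ParamsInRange (n δ M : ℕ) : Prop where
  ten_le : 10 ≤ M
  pow_le : 2 ^ 30 * M ^ 4 ≤ δ
  le_card : δ ≤ n

/-- The maximal distance between the initial weighted degree of a vertex and its target. -/
def slack (n M : ℕ) : ℕ :=
  ⌊512 * (tolerance M * n)⌋₊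

variable {n δ M : ℕ}

lemma le_topWeight (n δ M : ℕ) : (n / δ * (1 + 10 / M) : ℝ) ≤ topWeight n δ M :=
  Nat.le_ceil _

lemma div_le_topWeight (n δ M : ℕ) : (n / δ : ℝ) ≤ topWeight n δ M :=
  (le_mul_of_one_le_right (by positivity) (le_add_of_nonneg_right (by positivity))).trans
    (le_topWeight n δ M)

lemma topWeight_le (n δ M : ℕ) : (topWeight n δ M : ℝ) ≤ n / δ * (1 + 10 / M) + 1 :=
  (Nat.ceil_lt_add_one (by positivity)).le

lemma gridSize_pos (hM : 0 < M) : 0 < gridSize M := by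
  unfold gridSize
  positivity

lemma blockLength_pos (n δ : ℕ) : 0 < blockLength n δ :=
  Nat.succ_pos _

lemma le_blockLength (hδ : 0 < δ) (n : ℕ) : (n / δ / 8 : ℝ) ≤ blockLength n δ := by
  have := Nat.lt_mul_div_succ n (show 0 < 8 * δ by omega)
  rw [div_div, div_le_iff₀ (by positivity), mul_comm, mul_comm (δ : ℝ)]
  exact mod_cast this.le

lemma blockLength_le (n δ : ℕ) : (blockLength n δ : ℝ) ≤ n / δ / 8 + 1 := by
  have : ((n / (8 * δ) : ℕ) : ℝ) ≤ n / ((8 * δ : ℕ) : ℝ) := Nat.cast_div_le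
  rw [div_div, mul_comm (δ : ℝ), blockLength]
  push_cast at this ⊢
  linarith

lemma five_mul_blockLength_le (n δ M : ℕ) :
    5 * blockLength n δ ≤ topWeight n δ M + 5 := by
  have : (5 : ℝ) * blockLength n δ ≤ topWeight n δ M + 5 := by
    have : (0 : ℝ) ≤ n / δ := by positivity
    linarith [blockLength_le n δ, div_le_topWeight n δ M]
  exact mod_cast this

lemma probD_nonneg (M : ℕ) : 0 ≤ probD M := by
  unfold probD; positivity

lemma probC_nonneg (M : ℕ) : 0 ≤ probC M := by
  unfold probC; positivity

lemma tolerance_nonneg (M : ℕ) : 0 ≤ tolerance M := by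
  unfold tolerance; positivity

lemma tolerance_eq_probD_div (M : ℕ) : tolerance M = probD M / 2 ^ 15 := by
  rw [tolerance, gridSize, probD, div_div]
  push_cast
  ring

namespace ParamsInRange

lemma ten_le_cast (hP : ParamsInRange n δ M) : (10 : ℝ) ≤ M :=
  mod_cast hP.ten_le

lemma cast_pos (hP : ParamsInRange n δ M) : (0 : ℝ) < M := by
  linarith [hP.ten_le_cast]

lemma pow_le_cast (hP : ParamsInRange n δ M) : (2 : ℝ) ^ 30 * M ^ 4 ≤ δ :=
  mod_cast hP.pow_le

lemma minDeg_pos (hP : ParamsInRange n δ M) : (0 : ℝ) < δ := by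
  have := hP.cast_pos
  exact lt_of_lt_of_le (by positivity) hP.pow_le_cast

lemma card_pos (hP : ParamsInRange n δ M) : (0 : ℝ) < n :=
  hP.minDeg_pos.trans_le (mod_cast hP.le_card)

lemma one_le_div (hP : ParamsInRange n δ M) : (1 : ℝ) ≤ n / δ :=
  (_root_.one_le_div hP.minDeg_pos).2 (mod_cast hP.le_card)

lemma two_mul_blockLength_le (hP : ParamsInRange n δ M) :
    2 * (blockLength n δ : ℝ) ≤ 3 * topWeight n δ M := by
  linarith [blockLength_le n δ, div_le_topWeight n δ M, hP.one_le_div]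

lemma tolerance_mul_sq (hP : ParamsInRange n δ M) : tolerance M * (2 ^ 27 * M ^ 2) = 1 := by
  have := hP.cast_pos
  rw [tolerance, gridSize, Nat.cast_mul, Nat.cast_pow, Nat.cast_pow, Nat.cast_ofNat]
  exact one_div_mul_cancel (by positivity)

lemma mul_sq_le_tolerance_mul_minDeg (hP : ParamsInRange n δ M) :
    8 * (M : ℝ) ^ 2 ≤ tolerance M * δ := calc
  8 * (M : ℝ) ^ 2 = tolerance M * (2 ^ 27 * M ^ 2) * (8 * M ^ 2) := by
    rw [hP.tolerance_mul_sq, one_mul]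
  _ = tolerance M * (2 ^ 30 * M ^ 4) := by ring
  _ ≤ tolerance M * δ := mul_le_mul_of_nonneg_left hP.pow_le_cast (tolerance_nonneg M)

lemma mul_sq_le_tolerance_mul_card (hP : ParamsInRange n δ M) :
    8 * (M : ℝ) ^ 2 ≤ tolerance M * n :=
  hP.mul_sq_le_tolerance_mul_minDeg.trans
    (mul_le_mul_of_nonneg_left (mod_cast hP.le_card) (tolerance_nonneg M))

lemma probC_mul (hP : ParamsInRange n δ M) : probC M * M = 1 / 4 := by
  have := hP.cast_pos
  rw [probC]
  field_simp

lemma probD_pos (hP : ParamsInRange n δ M) : 0 < probD M := by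
  have := hP.cast_pos
  unfold probD
  positivity

lemma two_mul_probD_le_probC (hP : ParamsInRange n δ M) : 2 * probD M ≤ probC M := by
  have := hP.cast_pos
  have := hP.ten_le_cast
  rw [probD, probC, mul_one_div, div_le_div_iff₀ (by positivity) (by positivity)]
  nlinarith

lemma probC_le (hP : ParamsInRange n δ M) : probC M ≤ 1 / 40 := by
  have := hP.ten_le_cast
  exact one_div_le_one_div_of_le (by norm_num) (by linarith)

lemma tolerance_mul_le (hP : ParamsInRange n δ M) : tolerance M * M ≤ 1 / 2 := by
  have := hP.probC_mul
  have := hP.cast_pos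
  nlinarith [tolerance_eq_probD_div M, hP.two_mul_probD_le_probC]

lemma mul_blockLength_le (hP : ParamsInRange n δ M) :
    M * (blockLength n δ : ℝ) ≤ tolerance M * n / 8 := by
  have hM := hP.cast_pos
  have hM₁₀ := hP.ten_le_cast
  have hlinear : 80 * (M : ℝ) ≤ tolerance M * δ := by
    nlinarith [hP.mul_sq_le_tolerance_mul_minDeg]
  have hdiv : M * (n / δ : ℝ) ≤ tolerance M * n / 80 := by
    rw [mul_div_assoc', div_le_iff₀ hP.minDeg_pos]
    nlinarith [mul_le_mul_of_nonneg_left hlinear hP.card_pos.le]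
  nlinarith [mul_le_mul_of_nonneg_left (blockLength_le n δ) hM.le,
    hP.mul_sq_le_tolerance_mul_card]

lemma slack_le (hP : ParamsInRange n δ M) {c d : ℕ} (hd : δ ≤ d) (hc : probD M * d / 8 ≤ c) :
    slack n M ≤ c * blockLength n δ := by
  have hδ := hP.minDeg_pos
  have hd' : (δ : ℝ) ≤ d := mod_cast hd
  have : (slack n M : ℝ) ≤ c * blockLength n δ := calc
    (slack n M : ℝ) ≤ 512 * (tolerance M * n) :=
      Nat.floor_le (mul_nonneg (by norm_num) (mul_nonneg (tolerance_nonneg M) hP.card_pos.le))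
    _ = probD M * δ / 8 * (n / δ / 8) := by
      rw [tolerance_eq_probD_div]; field_simp; ring
    _ ≤ probD M * d / 8 * (n / δ / 8) := by gcongr; exact hP.probD_pos.le
    _ ≤ c * blockLength n δ := by gcongr; exact le_blockLength (mod_cast hδ) n
  exact mod_cast this

lemma two_le_of_probD_mul_le (hP : ParamsInRange n δ M) {c d : ℕ} (hd : δ ≤ d)
    (hc : probD M * d / 8 ≤ c) : 2 ≤ c := by
  have hd' : (δ : ℝ) ≤ d := mod_cast hd
  have hlarge := hP.mul_sq_le_tolerance_mul_minDeg
  rw [tolerance_eq_probD_div] at hlarge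
  have : (2 : ℝ) ≤ c := by
    nlinarith [mul_le_mul_of_nonneg_left hd' (probD_nonneg M), hP.ten_le_cast]
  exact mod_cast this

lemma mul_card_le_blockLength_mul (hP : ParamsInRange n δ M) {c d r s : ℕ} (hd : δ ≤ d)
    (hc : probC M * d / 8 ≤ c) (hr : (r : ℝ) ≤ 4 * probD M * n + s)
    (hs : M * (s : ℝ) ≤ tolerance M * n / 8) :
    M * (2 * r + 2 * blockLength n δ) ≤ blockLength n δ * c := by
  have hM := hP.cast_pos
  have hM₁₀ := hP.ten_le_cast
  have hδ := hP.minDeg_pos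
  have hd' : (δ : ℝ) ≤ d := mod_cast hd
  have hτ := tolerance_nonneg M
  have hp := probC_nonneg M
  have hgain : M * (2 ^ 19 * (tolerance M * n)) ≤ blockLength n δ * c := calc
    M * (2 ^ 19 * (tolerance M * n)) = n / δ / 8 * (probC M * δ / 8) := by
      rw [probC, tolerance, gridSize]; push_cast; field_simp; ring
    _ ≤ n / δ / 8 * (probC M * d / 8) := by gcongr
    _ ≤ blockLength n δ * c := by gcongr; exact le_blockLength (mod_cast hδ) n
  have hr' : M * (r : ℝ) ≤ M * (2 ^ 17 * (tolerance M * n)) + M * s := by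
    rw [← mul_add]
    refine mul_le_mul_of_nonneg_left (hr.trans_eq ?_) hM.le
    rw [tolerance_eq_probD_div]; ring
  have : (M : ℝ) * (2 * r + 2 * blockLength n δ) ≤ blockLength n δ * c := by
    nlinarith [hP.mul_blockLength_le, mul_nonneg hτ hP.card_pos.le]
  exact mod_cast this

lemma mul_le_of_mul_minDeg_le (hP : ParamsInRange n δ M) {s : ℕ}
    (hs : (s : ℝ) * δ ≤ tolerance M * n / 4) : M * (s : ℝ) ≤ tolerance M * n / 8 := by
  have hM : (M : ℝ) ≤ M ^ 4 := le_self_pow₀ (by linarith [hP.ten_le_cast]) (by norm_num)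
  nlinarith [hP.pow_le_cast, hP.cast_pos, (Nat.cast_nonneg s : (0 : ℝ) ≤ s)]

lemma two_mul_le_tolerance_mul_div (hP : ParamsInRange n δ M) {s : ℕ}
    (hs : (s : ℝ) * δ ≤ tolerance M * n / 4) : 2 * (s : ℝ) ≤ tolerance M * (n / δ) := by
  rw [mul_div_assoc', le_div_iff₀ hP.minDeg_pos]
  linarith [mul_nonneg (tolerance_nonneg M) hP.card_pos.le]

lemma two_mul_le_tolerance_mul_topWeight (hP : ParamsInRange n δ M) {s : ℕ}
    (hs : (s : ℝ) * δ ≤ tolerance M * n / 4) :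
    ((2 * s : ℕ) : ℝ) ≤ tolerance M * topWeight n δ M := by
  push_cast
  exact (hP.two_mul_le_tolerance_mul_div hs).trans
    (mul_le_mul_of_nonneg_left (div_le_topWeight n δ M) (tolerance_nonneg M))

lemma topWeight_add_le (hP : ParamsInRange n δ M) {s : ℕ}
    (hs : (s : ℝ) * δ ≤ tolerance M * n / 4) :
    ((topWeight n δ M + 6 + 2 * s : ℕ) : ℝ) ≤ n / δ * (1 + 11 / M) + 8 := by
  have hτ : tolerance M ≤ 1 / M := by
    rw [le_div_iff₀ hP.cast_pos]
    linarith [hP.tolerance_mul_le]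
  have hs' : 2 * (s : ℝ) ≤ n / δ * (1 / M) := (hP.two_mul_le_tolerance_mul_div hs).trans <| by
    rw [mul_comm]; gcongr
  have hsplit : (n / δ * (1 + 11 / M) : ℝ) = n / δ * (1 + 10 / M) + n / δ * (1 / M) := by ring
  push_cast
  linarith [topWeight_le n δ M]

lemma topWeight_add_le_five_mul (hP : ParamsInRange n δ M) {s : ℕ}
    (hs : (s : ℝ) * δ ≤ tolerance M * n / 4) : topWeight n δ M + 6 + 2 * s ≤ 5 * n := by
  have hM : (11 / M : ℝ) ≤ 11 / 10 := by
    gcongr; exact hP.ten_le_cast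
  have hM₄ : (1 : ℝ) ≤ M ^ 4 := one_le_pow₀ (by linarith [hP.ten_le_cast])
  have hdiv : (n / δ : ℝ) ≤ n :=
    div_le_self (Nat.cast_nonneg n) (by linarith [hP.pow_le_cast])
  have hn : (8 : ℝ) ≤ n := by
    linarith [hP.pow_le_cast, (Nat.cast_le (α := ℝ)).2 hP.le_card]
  have : ((topWeight n δ M + 6 + 2 * s : ℕ) : ℝ) ≤ 5 * n := by
    nlinarith [hP.topWeight_add_le hs, hP.one_le_div]
  exact mod_cast this

lemma probD_le (hP : ParamsInRange n δ M) :
    probD M ≤ 1 / (10 * M) := by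
  have := hP.ten_le_cast
  exact one_div_le_one_div_of_le (by positivity) (by nlinarith)

lemma neZero (hP : ParamsInRange n δ M) : NeZero M :=
  ⟨by have := hP.ten_le; omega⟩

lemma probC_pos (hP : ParamsInRange n δ M) : 0 < probC M := by
  linarith [hP.probD_pos, hP.two_mul_probD_le_probC]

lemma tolerance_le_one (hP : ParamsInRange n δ M) : tolerance M ≤ 1 := by
  nlinarith [hP.tolerance_mul_le, hP.ten_le_cast, tolerance_nonneg M]

lemma topWeight_pos (hP : ParamsInRange n δ M) :
    (0 : ℝ) < topWeight n δ M :=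
  zero_lt_one.trans_le (hP.one_le_div.trans (div_le_topWeight n δ M))

lemma card_le_mul_topWeight (hP : ParamsInRange n δ M) :
    (n : ℝ) ≤ (1 - 4 / M) * (δ * (topWeight n δ M * (1 - probD M))) := by
  have hM := hP.ten_le_cast
  have hq₀ := hP.probD_pos
  have hq := hP.probD_le
  have htop := le_topWeight n δ M
  rw [div_mul_eq_mul_div, div_le_iff₀' hP.minDeg_pos] at htop
  obtain ⟨t, ht⟩ : ∃ t : ℝ, t = 1 / M := ⟨_, rfl⟩
  have ht₀ : 0 < t := ht ▸ one_div_pos.2 hP.cast_pos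
  have ht₁ : t ≤ 1 / 10 := ht ▸ one_div_le_one_div_of_le (by norm_num) hM
  rw [show (10 : ℝ) / M = 10 * t by rw [ht]; ring] at htop
  rw [show 1 / (10 * (M : ℝ)) = t / 10 by rw [ht]; field_simp] at hq
  rw [show (4 : ℝ) / M = 4 * t by rw [ht]; ring]
  have hfactor : 0 ≤ (1 - 4 * t) * (1 - probD M) := mul_nonneg (by linarith) (by linarith)
  have hone : 1 ≤ (1 - 4 * t) * (1 - probD M) * (1 + 10 * t) := calc
    1 ≤ (1 - t / 10) * (1 + 2 * t) := by nlinarith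
    _ ≤ (1 - probD M) * ((1 - 4 * t) * (1 + 10 * t)) := by
      gcongr
      · linarith
      · nlinarith
    _ = _ := by ring
  calc (n : ℝ) ≤ (1 - 4 * t) * (1 - probD M) * (1 + 10 * t) * n :=
      le_mul_of_one_le_left n.cast_nonneg hone
    _ = (1 - 4 * t) * (1 - probD M) * (n * (1 + 10 * t)) := by ring
    _ ≤ (1 - 4 * t) * (1 - probD M) * (δ * topWeight n δ M) := by gcongr
    _ = _ := by ring

lemma tolerance_pos (hP : ParamsInRange n δ M) : 0 < tolerance M := by
  rw [tolerance_eq_probD_div]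
  linarith [hP.probD_pos]

lemma exp_neg_probD_mul_card_le (hP : ParamsInRange n δ M) :
    Real.exp (-(probD M * n)) ≤ 1 / 8 := by
  have hle : 8 ≤ probD M * n := calc
    (8 : ℝ) ≤ 8 * M ^ 2 := by nlinarith [hP.ten_le_cast]
    _ ≤ tolerance M * n := hP.mul_sq_le_tolerance_mul_card
    _ ≤ probD M * n := by
      gcongr
      linarith [tolerance_eq_probD_div M, hP.probD_pos]
  rw [Real.exp_neg, ← one_div]
  exact one_div_le_one_div_of_le (by norm_num) (by linarith [Real.add_one_le_exp (probD M * n)])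

end ParamsInRange

end Parameters

section GoodSplit

variable {V : Type*} [Fintype V] (G : SimpleGraph V) [DecidableRel G.Adj] (δ M : ℕ) (x : V → ℕ)

/-- The mean of the weighted degree of `v` under the initial weighting, over the random choice of
the reservoir and of the labels of the other vertices. -/
def expectedWeight (v : V) : ℝ :=
  G.degree v * (1 + topWeight (Fintype.card V) δ M * ((1 - probD M) * (x v / gridSize M)) +
    2 * blockLength (Fintype.card V) δ * probD M)

/-- The deviation from `expectedWeight` tolerated at `v`. -/
def weightError (v : V) : ℝ :=
  5 * tolerance M * topWeight (Fintype.card V) δ M * G.degree v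

/-- The vertices of `W` whose weighted degree may fall into the interval from `y₁` to `y₂`. -/
def window (W : Finset V) (y₁ y₂ : ℕ) : Finset V :=
  {v ∈ W | y₁ - weightError G δ M v ≤ expectedWeight G δ M x v ∧
    expectedWeight G δ M x v ≤ y₂ + weightError G δ M v}

/-- The capacity of the interval from `y₁` to `y₂`: slightly less than its length, up to an error
term accounting for the random fluctuations. -/
def windowBound (n M y₁ y₂ : ℕ) : ℝ :=
  (1 - 4 / M) * ((y₂ : ℝ) - y₁) + 22 * (tolerance M * n)

/-- No interval of integers contains many more weighted degrees of vertices of `W` than it would if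
these were spread evenly, with density slightly below `ρ`. -/
def HasSmallWindows (W : Finset V) (ρ : ℝ) : Prop :=
  ∀ y₁ y₂ : ℕ, y₁ ≤ y₂ → y₂ ≤ 5 * Fintype.card V ^ 2 →
    #(window G δ M x W y₁ y₂) ≤ ρ * windowBound (Fintype.card V) M y₁ y₂

/-- A choice of labels `x` and disjoint classes `C`, `D` behaving as a random one should: outside a
set `Bad` of small volume all the relevant degrees are close to their means, and the expected
weighted degrees are well spread. -/
structure IsGoodSplit [DecidableEq V] (C D Bad : Finset V) : Prop where
  disjoint : Disjoint C D
  label_lt : ∀ v, x v < gridSize M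
  abs_degIn_D_sub_le : ∀ v ∉ Bad,
    |degIn G D v - probD M * G.degree v| ≤ tolerance M * G.degree v
  abs_degIn_C_sub_le : ∀ v ∉ Bad,
    |degIn G C v - probC M * G.degree v| ≤ tolerance M * G.degree v
  abs_degIn_heavy_sub_le : ∀ v ∉ Bad, ∀ a < gridSize M,
    |degIn G {u | u ∉ D ∧ gridSize M ≤ x u + a} v -
      (1 - probD M) * (a / gridSize M) * G.degree v| ≤ tolerance M * G.degree v
  volume_bad_le : volume G Bad ≤ probD M ^ 2 * (tolerance M * Fintype.card V) / 80
  card_D_le : #D ≤ 4 * probD M * Fintype.card V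
  smallWindows_univ : HasSmallWindows G δ M x univ 1
  smallWindows_C : HasSmallWindows G δ M x C (probC M)

variable {G δ M x} {W : Finset V}

lemma HasSmallWindows.card_filter_Icc_le {ρ : ℝ} (hW : HasSmallWindows G δ M x W ρ)
    {W' : Finset V} (hW' : W' ⊆ W) {w : V → ℕ}
    (hclose : ∀ v ∈ W', |w v - expectedWeight G δ M x v| ≤ weightError G δ M v) {y₁ y₂ : ℕ}
    (hy : y₁ ≤ y₂) (hy₂ : y₂ ≤ 5 * Fintype.card V ^ 2) :
    #{v ∈ W' | w v ∈ Icc y₁ y₂} ≤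
      ρ * (1 - 4 / M) * ((y₂ : ℝ) - y₁) + ρ * (22 * (tolerance M * Fintype.card V)) := by
  refine le_trans (mod_cast card_le_card fun v hv ↦ ?_)
    ((hW y₁ y₂ hy hy₂).trans_eq (by rw [windowBound, mul_add, mul_assoc]))
  rw [mem_filter, mem_Icc] at hv
  obtain ⟨hvW, hlo, hhi⟩ := hv
  have hlo' : (y₁ : ℝ) ≤ w v := mod_cast hlo
  have hhi' : (w v : ℝ) ≤ y₂ := mod_cast hhi
  have herr := abs_le.1 (hclose v hvW)
  exact mem_filter.2 ⟨hW' hvW, by linarith, by linarith⟩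

lemma HasSmallWindows.exists_targets {ρ : ℝ} (hW : HasSmallWindows G δ M x W ρ)
    (hP : ParamsInRange (Fintype.card V) δ M) {W' : Finset V} (hW' : W' ⊆ W) {w : V → ℕ}
    (hclose : ∀ v ∈ W', |w v - expectedWeight G δ M x v| ≤ weightError G δ M v)
    (hw : ∀ v, w v ≤ 5 * Fintype.card V ^ 2) {R : Finset ℕ} (hR : R ⊆ range M)
    (hR₀ : R.Nonempty) (hρ : ρ * (1 - 4 / M) * M ≤ #R) (hρ₂ : ρ * M ≤ 2 * #R) {X : Finset ℕ}
    (hX : M * (#X : ℝ) ≤ tolerance M * Fintype.card V / 4) :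
    ∃ t : V → ℕ, Set.InjOn t W' ∧ ∀ v ∈ W', t v ∈ Icc (w v) (w v + slack (Fintype.card V) M) ∧
      blockClass (blockLength (Fintype.card V) δ) M (t v) ∈ R ∧ t v ∉ X := by
  refine exists_injOn_blockClass (blockLength_pos _ _) (by have := hP.ten_le; omega) hR X hρ ?_
    fun u _ v _ huv ↦ hW.card_filter_Icc_le hW' hclose huv (hw v)
  set T := tolerance M * Fintype.card V
  have hT₈₀₀ : 800 ≤ T := by nlinarith [hP.mul_sq_le_tolerance_mul_card, hP.ten_le_cast]
  have hR₁ : (1 : ℝ) ≤ #R := mod_cast hR₀.card_pos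
  have hslack : 512 * T - 1 ≤ slack (Fintype.card V) M := (Nat.sub_one_lt_floor _).le
  calc M * (ρ * (22 * T) + #R * blockLength (Fintype.card V) δ + #X)
      = ρ * M * (22 * T) + #R * (M * blockLength (Fintype.card V) δ) + M * #X := by ring
    _ ≤ 2 * #R * (22 * T) + #R * (T / 8) + #R * (T / 4) := by
      have hX' : M * (#X : ℝ) ≤ #R * (T / 4) := hX.trans (le_mul_of_one_le_left (by linarith) hR₁)
      have hK := hP.mul_blockLength_le
      gcongr
    _ = #R * (2 * (22 * T) + T / 8 + T / 4) := by ring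
    _ ≤ #R * slack (Fintype.card V) M := by gcongr; linarith

variable [DecidableEq V] {C D Bad : Finset V}

lemma exists_isRaise_baseWeight (hP : ParamsInRange (Fintype.card V) δ M)
    (hδ : ∀ v, δ ≤ G.degree v) {S : Finset V} {N : ℕ}
    (hS : #S * (δ : ℝ) ≤ tolerance M * Fintype.card V / 4) :
    ∃ f, IsRaise S (2 * #S) (baseWeight D x N (topWeight (Fintype.card V) δ M)
        (blockLength (Fintype.card V) δ)) f ∧
      Set.InjOn (weightedDeg G f) S ∧
      (∀ e, f e ∈ Icc 1 (topWeight (Fintype.card V) δ M + 6 + 2 * #S)) ∧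
      ∀ v, weightedDeg G f v ≤ 5 * Fintype.card V ^ 2 := by
  set h := topWeight (Fintype.card V) δ M
  set K := blockLength (Fintype.card V) δ
  have hdeg (v : V) : 2 ≤ G.degree v := by
    have := Nat.one_le_pow 4 M (by have := hP.ten_le; omega)
    have := hP.pow_le
    have := hδ v
    omega
  obtain ⟨f, hf, hinj⟩ := exists_isRaise_injOn (G := G) S (baseWeight D x N h K)
    fun u _ v _ _ ↦ .inl <| exists_adj_ne_of_degree_ne_one (one_le_two.trans (hdeg u))
      fun hu ↦ by have := hdeg u; omega
  have hf_mem (e : Sym2 V) : f e ∈ Icc 1 (h + 6 + 2 * #S) := by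
    have hlo := one_le_baseWeight D x N h K e
    have hhi := baseWeight_le_one_add_max D x N h K e
    have hK : 5 * K ≤ h + 5 := five_mul_blockLength_le _ _ _
    have := hf e
    exact mem_Icc.2 (by omega)
  refine ⟨f, hf, hinj, hf_mem, fun v ↦ ?_⟩
  calc weightedDeg G f v
      ≤ weightedDeg G (fun _ ↦ 0) v + G.degree v * (h + 6 + 2 * #S) :=
        weightedDeg_le_add G (fun e ↦ by simpa using (mem_Icc.1 (hf_mem e)).2) v
    _ = G.degree v * (h + 6 + 2 * #S) := by simp [weightedDeg]
    _ ≤ Fintype.card V * (5 * Fintype.card V) :=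
      Nat.mul_le_mul (G.degree_lt_card_verts v).le (hP.topWeight_add_le_five_mul hS)
    _ = 5 * Fintype.card V ^ 2 := by ring

namespace IsGoodSplit

lemma exists_core (hs : IsGoodSplit G δ M x C D Bad) (hP : ParamsInRange (Fintype.card V) δ M)
    (hδ : ∀ v, δ ≤ G.degree v) :
    ∃ A' C' D' : Finset V, A' ⊆ (C ∪ D)ᶜ ∧ C' ⊆ C ∧ D' ⊆ D ∧
      (∀ v ∈ A' ∪ C', v ∉ Bad ∧ probD M * G.degree v / 8 ≤ degIn G D' v) ∧
      (∀ d ∈ D', probC M * G.degree d / 8 ≤ degIn G C' d) ∧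
      #(A' ∪ C' ∪ D')ᶜ * (δ : ℝ) ≤ tolerance M * Fintype.card V / 4 := by
  have hq := hP.probD_pos
  have hqp := hP.two_mul_probD_le_probC
  have hτ := tolerance_eq_probD_div M
  have half_le {ρ : ℝ} (hρ : 2 * tolerance M ≤ ρ) {c d : ℕ}
      (h : |c - ρ * d| ≤ tolerance M * d) : ρ * d / 2 ≤ c := by
    linarith [(abs_le.1 h).1, mul_le_mul_of_nonneg_right hρ (Nat.cast_nonneg d)]
  obtain ⟨A', C', D', hA', hC', hD', hAC, hDC, hS⟩ :=
    exists_core_partition G (p := probC M) hs.disjoint hq (by linarith [hP.probC_le])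
      (by linarith) hδ (fun v hv ↦ half_le (by linarith) (hs.abs_degIn_D_sub_le v hv))
      (fun v hv ↦ half_le (by linarith) (hs.abs_degIn_C_sub_le v hv))
  refine ⟨A', C', D', hA', hC', hD', hAC, hDC, ?_⟩
  refine le_of_mul_le_mul_left ?_ (pow_pos hq 2)
  linarith [hs.volume_bad_le]

lemma abs_weightedDeg_sub_expectedWeight_le (hs : IsGoodSplit G δ M x C D Bad)
    (hP : ParamsInRange (Fintype.card V) δ M) {f : Sym2 V → ℕ} {S : Finset V} {m : ℕ}
    (hf : IsRaise S m (baseWeight D x (gridSize M) (topWeight (Fintype.card V) δ M)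
      (blockLength (Fintype.card V) δ)) f)
    (hm : m ≤ tolerance M * topWeight (Fintype.card V) δ M) {v : V} (hvD : v ∉ D) (hv : v ∉ Bad) :
    |weightedDeg G f v - expectedWeight G δ M x v| ≤ weightError G δ M v := by
  have hlo := weightedDeg_mono G (fun e ↦ (hf e).1) v
  have hhi := weightedDeg_le_add G (fun e ↦ (hf e).2.1) v
  rw [weightedDeg_baseWeight _ _ _ _ _ G hvD, ← Nat.cast_le (α := ℝ)] at hlo hhi
  have hD := abs_le.1 (hs.abs_degIn_D_sub_le v hv)
  have hheavy := abs_le.1 (hs.abs_degIn_heavy_sub_le v hv (x v) (hs.label_lt v))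
  set h := topWeight (Fintype.card V) δ M
  set K := blockLength (Fintype.card V) δ
  have hd : (0 : ℝ) ≤ G.degree v := Nat.cast_nonneg _
  have hh : (0 : ℝ) ≤ h := Nat.cast_nonneg _
  have hK : (0 : ℝ) ≤ 2 * K := by positivity
  have hτd : 0 ≤ tolerance M * G.degree v := mul_nonneg (tolerance_nonneg M) hd
  have hKh := mul_le_mul_of_nonneg_right hP.two_mul_blockLength_le hτd
  have hraise := mul_le_mul_of_nonneg_left hm hd
  push_cast at hlo hhi
  rw [abs_le, expectedWeight, weightError]
  constructor
  · linarith [mul_le_mul_of_nonneg_left hheavy.1 hh, mul_le_mul_of_nonneg_left hD.1 hK]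
  · linarith [mul_le_mul_of_nonneg_left hheavy.2 hh, mul_le_mul_of_nonneg_left hD.2 hK]

lemma exists_targets (hs : IsGoodSplit G δ M x C D Bad)
    (hP : ParamsInRange (Fintype.card V) δ M) {A' C' S : Finset V} (hAC : Disjoint A' C')
    (hC' : C' ⊆ C) {w : V → ℕ}
    (hclose : ∀ v ∈ A' ∪ C', |w v - expectedWeight G δ M x v| ≤ weightError G δ M v)
    (hw : ∀ v, w v ≤ 5 * Fintype.card V ^ 2)
    (hS : M * (#S : ℝ) ≤ tolerance M * Fintype.card V / 8) :
    ∃ t : V → ℕ, Set.InjOn t A' ∧ Set.InjOn t C' ∧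
      (∀ v ∈ A' ∪ C', t v ∈ Icc (w v) (w v + slack (Fintype.card V) M)) ∧
      (∀ v ∈ A', 3 ≤ blockClass (blockLength (Fintype.card V) δ) M (t v)) ∧
      (∀ v ∈ C', blockClass (blockLength (Fintype.card V) δ) M (t v) = 0) ∧
      ∀ v ∈ A' ∪ C', ∀ s ∈ S, t v ≠ w s ∧ t v + blockLength (Fintype.card V) δ ≠ w s := by
  set K := blockLength (Fintype.card V) δ
  have hM := hP.ten_le
  have := hP.cast_pos
  have hM₁₀ := hP.ten_le_cast
  let X := S.image w ∪ S.image (w · - K)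
  have hXcard : #X ≤ #S + #S :=
    (card_union_le _ _).trans (add_le_add card_image_le card_image_le)
  have hX : M * (#X : ℝ) ≤ tolerance M * Fintype.card V / 4 := by
    have : (#X : ℝ) ≤ #S + #S := mod_cast hXcard
    nlinarith
  have havoid {a : ℕ} (ha : a ∉ X) (s : V) (hs : s ∈ S) : a ≠ w s ∧ a + K ≠ w s := by
    grind
  have hmul : (1 - 4 / M : ℝ) * M = M - 4 := by field_simp
  have hcard : ((M - 3 : ℕ) : ℝ) = M - 3 := by rw [Nat.cast_sub (by omega)]; norm_num
  obtain ⟨tA, htA, htA'⟩ := hs.smallWindows_univ.exists_targets hP (subset_univ A')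
    (fun v hv ↦ hclose v (mem_union_left _ hv)) hw (R := Ico 3 M) (by grind)
    (nonempty_Ico.2 (by omega)) (by rw [Nat.card_Ico, hcard]; linarith)
    (by rw [Nat.card_Ico, hcard]; linarith) hX
  obtain ⟨tC, htC, htC'⟩ := hs.smallWindows_C.exists_targets hP hC'
    (fun v hv ↦ hclose v (mem_union_right _ hv)) hw (R := {0}) (by grind)
    (singleton_nonempty 0) (by
      rw [card_singleton, mul_assoc, hmul, mul_sub, hP.probC_mul]
      norm_num
      linarith [probC_nonneg M])
    (by rw [card_singleton, hP.probC_mul]; norm_num) hX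
  refine ⟨fun v ↦ if v ∈ C' then tC v else tA v, ?_, ?_, ?_, ?_, ?_, ?_⟩
  · exact htA.congr fun v hv ↦ (if_neg (disjoint_left.1 hAC hv)).symm
  · exact htC.congr fun v hv ↦ (if_pos hv).symm
  all_goals grind [disjoint_left]

lemma exists_isIrregularAssignment (hs : IsGoodSplit G δ M x C D Bad)
    (hP : ParamsInRange (Fintype.card V) δ M) (hδ : ∀ v, δ ≤ G.degree v) :
    ∃ (k : ℕ) (f : Sym2 V → ℕ), IsIrregularAssignment G k f ∧
      (k : ℝ) ≤ Fintype.card V / δ * (1 + 11 / M) + 8 := by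
  obtain ⟨A', C', D', hA', hC', hD', hAC, hDC, hScard⟩ := hs.exists_core hP hδ
  have hdisjAC : Disjoint A' C' := by grind [disjoint_left, mem_compl]
  have hnotD : ∀ v ∈ A' ∪ C', v ∉ D := by
    have := hs.disjoint
    grind [disjoint_left, mem_compl]
  have hdisjD : Disjoint (A' ∪ C') D' := disjoint_left.2 fun v hv hvD ↦ hnotD v hv (hD' hvD)
  set S := (A' ∪ C' ∪ D')ᶜ
  have hMS := hP.mul_le_of_mul_minDeg_le hScard
  obtain ⟨f₀, hf₀, hinj, hf₀_mem, hw⟩ :=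
    exists_isRaise_baseWeight (D := D) (x := x) (N := gridSize M) hP hδ hScard
  obtain ⟨t, htA, htC, ht, hclassA, hclassC, htS⟩ := hs.exists_targets hP hdisjAC hC'
    (fun v hv ↦ hs.abs_weightedDeg_sub_expectedWeight_le hP hf₀
      (hP.two_mul_le_tolerance_mul_topWeight hScard) (hnotD v hv) (hAC v hv).1) hw hMS
  have hf₀D : ∀ v ∈ A' ∪ C', ∀ d ∈ D',
      f₀ s(v, d) = 1 + 2 * blockLength (Fintype.card V) δ := fun v hv d hd ↦ by
    rw [(hf₀ s(v, d)).2.2 (by grind [mem_compl]), baseWeight_mk, if_pos (.inr (hD' hd))]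
  have hcompl : (#(A' ∪ C')ᶜ : ℝ) ≤ 4 * probD M * Fintype.card V + #S := by
    have : #(A' ∪ C')ᶜ ≤ #D + #S :=
      (card_le_card (by grind [mem_compl])).trans (card_union_le D S)
    exact le_trans (mod_cast this) (add_le_add_left hs.card_D_le _)
  obtain ⟨f, hf⟩ := exists_isIrregularAssignment_of_targets (blockLength_pos _ _)
    (by have := hP.ten_le; omega) hdisjAC hdisjD (fun e _ ↦ hf₀_mem e)
    (fun v hv d hd ↦ by
      have := five_mul_blockLength_le (Fintype.card V) δ M
      rw [hf₀D v hv d hd]; omega)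
    hinj htA htC
    (fun v hv ↦ Icc_subset_Icc_right
      (Nat.add_le_add_left (hP.slack_le (hδ v) (hAC v hv).2) _) (ht v hv))
    hclassA hclassC (fun v hv s hs ↦ ⟨(htS v hv s hs).1, fun _ ↦ (htS v hv s hs).2⟩)
    (fun c hc ↦ hP.two_le_of_probD_mul_le (hδ c) (hAC c (mem_union_right _ hc)).2)
    (fun d hd ↦ hP.mul_card_le_blockLength_mul (hδ d) (hDC d hd) hcompl hMS)
  exact ⟨_, f, hf, hP.topWeight_add_le hScard⟩

end IsGoodSplit

end GoodSplit

section RandomSplit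

open scoped BigOperators

lemma prob_affine_mem_Icc_le {N : ℕ} (α : ℝ) {β lo hi : ℝ} (hβ : 0 < β) (hle : lo ≤ hi) :
    prob {a : Fin N | α + β * (a : ℕ) ∈ Set.Icc lo hi} ≤ ((hi - lo) / β + 1) / N := by
  classical
  rw [prob_eq_card_div, Fintype.card_fin]
  gcongr
  set S : Finset (Fin N) := {a | a ∈ {a : Fin N | α + β * (a : ℕ) ∈ Set.Icc lo hi}}
  have hS (a) (ha : a ∈ S) : α + β * (a : ℕ) ∈ Set.Icc lo hi :=
    Set.mem_ofPred.1 ((mem_filter_univ a).1 ha)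
  obtain hempty | hne := S.eq_empty_or_nonempty
  · rw [hempty, card_empty, Nat.cast_zero]
    exact add_nonneg (div_nonneg (sub_nonneg.2 hle) hβ.le) zero_le_one
  have hlow := (hS _ (S.min'_mem hne)).1
  have hhigh := (hS _ (S.max'_mem hne)).2
  have hspan : ((S.max' hne : ℕ) : ℝ) - (S.min' hne : ℕ) ≤ (hi - lo) / β := by
    rw [le_div_iff₀ hβ]
    linarith
  have hcard : #S + (S.min' hne : ℕ) ≤ S.max' hne + 1 := by
    have := card_le_card (t := Icc (S.min' hne) (S.max' hne)) fun a ha ↦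
      mem_Icc.2 ⟨S.min'_le a ha, S.le_max' a ha⟩
    rw [Fin.card_Icc] at this
    have : (S.min' hne : ℕ) ≤ S.max' hne := S.min'_le _ (S.max'_mem hne)
    omega
  have : (#S : ℝ) + (S.min' hne : ℕ) ≤ (S.max' hne : ℕ) + 1 := mod_cast hcard
  linarith

variable {V : Type*} [Fintype V]

section VerticesIn

variable {Ω : Type*}

open Classical in
/-- The random set of vertices whose label, under the labelling `ω`, lies in `F`. -/
def verticesIn (F : Set Ω) (ω : V → Ω) : Finset V :=
  {v | ω v ∈ F}

lemma mem_verticesIn {F : Set Ω} {ω : V → Ω} {v : V} : v ∈ verticesIn F ω ↔ ω v ∈ F := by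
  simp [verticesIn]

lemma verticesIn_univ (ω : V → Ω) : verticesIn Set.univ ω = univ := by
  simp [verticesIn]

variable [DecidableEq V] [Fintype Ω] [Nonempty Ω]

lemma prob_lt_abs_degIn_verticesIn_sub_le (G : SimpleGraph V) [DecidableRel G.Adj] (F : Set Ω)
    {τ : ℝ} (hτ₀ : 0 ≤ τ) (hτ₁ : τ ≤ 1) {v : V} (hv : 0 < G.degree v) :
    prob {ω : V → Ω | τ * G.degree v <
      |degIn G (verticesIn F ω) v - prob F * G.degree v|} ≤
      2 * Real.exp (-(τ ^ 2 * G.degree v / 4)) := by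
  classical
  have hdeg (ω : V → Ω) : degIn G (verticesIn F ω) v = #{u ∈ G.neighborFinset v | ω u ∈ F} := by
    rw [degIn, verticesIn, filter_comm, SimpleGraph.neighborFinset_eq_filter]
  simp only [hdeg, ← G.card_neighborFinset_eq_degree] at hv ⊢
  exact prob_abs_card_sub_gt_le_exp (card_pos.1 hv) F hτ₀ hτ₁

lemma prob_lt_card_verticesIn_le [Nonempty V] (F : Set Ω) (hF : 0 < prob F) :
    prob {ω : V → Ω | 4 * prob F * Fintype.card V < #(verticesIn F ω)} ≤
      Real.exp (-(prob F * Fintype.card V)) := by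
  classical
  have hcard : (0 : ℝ) < Fintype.card V := mod_cast Fintype.card_pos
  have hmean : ∑ _v : V, prob F = prob F * Fintype.card V := by
    rw [sum_const, card_univ, nsmul_eq_mul, mul_comm]
  have htail := prob_card_ge_le_exp (univ : Finset V) (fun _ ↦ F)
    (B := 2 * (prob F * Fintype.card V)) (T := 3 * (prob F * Fintype.card V)) (by positivity)
    (by positivity) (by nlinarith [mul_pos hF hcard])
    (by rw [hmean]; nlinarith [mul_pos hF hcard])
  refine (prob_mono fun ω hω ↦ ?_).trans (htail.trans (Real.exp_le_exp.2 ?_))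
  · have hω := Set.mem_ofPred.1 hω
    rw [Set.mem_ofPred_eq, hmean]
    exact (by linarith : _ ≤ (_ : ℝ)).trans hω.le
  · have hexp : (3 * (prob F * Fintype.card V)) ^ 2 / (4 * (2 * (prob F * Fintype.card V))) =
        9 / 8 * (prob F * Fintype.card V) := by
      field_simp
      ring
    rw [hexp]
    nlinarith [mul_pos hF hcard]

lemma prob_lt_card_filter_le_exp [Nonempty V] {Ω' : Type*} [Fintype Ω'] [Nonempty Ω']
    {E : Set Ω} (hE : 0 < prob E) (F : V → Set Ω') [∀ v, DecidablePred (· ∈ F v)] {τ W : ℝ}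
    (hτ₀ : 0 ≤ τ) (hτ₁ : τ ≤ 1) (hF : ∀ v, prob (F v) ≤ W) :
    prob {ω : V → Ω × Ω' | prob E * ((W + τ) * Fintype.card V) <
      #{v ∈ verticesIn (E ×ˢ Set.univ) ω | (ω v).2 ∈ F v}} ≤
      Real.exp (-(τ ^ 2 * (prob E * Fintype.card V) / 4)) := by
  classical
  set n : ℝ := (Fintype.card V : ℝ)
  have hn : 0 < prob E * n := mul_pos hE (Nat.cast_pos.2 Fintype.card_pos)
  have hsum {c : ℝ} (hc : ∀ v, prob (F v) ≤ c) : ∑ v, prob (E ×ˢ F v) ≤ prob E * (c * n) := calc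
    ∑ v, prob (E ×ˢ F v) ≤ ∑ _v : V, prob E * c :=
      sum_le_sum fun v _ ↦ by rw [prob_prod]; gcongr; exact hc v
    _ = prob E * (c * n) := by rw [sum_const, card_univ, nsmul_eq_mul]; ring
  have htail := prob_card_ge_le_exp univ (fun v ↦ E ×ˢ F v) (B := prob E * n)
    (T := τ * (prob E * n)) hn (by positivity) (by nlinarith)
    ((hsum fun v ↦ prob_le_one _).trans_eq (by rw [one_mul]))
  have hexp : (τ * (prob E * n)) ^ 2 / (4 * (prob E * n)) = τ ^ 2 * (prob E * n) / 4 := by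
    field_simp
  rw [hexp] at htail
  refine (prob_mono fun ω hω ↦ ?_).trans htail
  have hω := Set.mem_ofPred.1 hω
  have hfilter : {v ∈ verticesIn (E ×ˢ Set.univ) ω | (ω v).2 ∈ F v} =
      ({v | ω v ∈ E ×ˢ F v} : Finset V) := by
    ext v
    simp [mem_verticesIn, Set.mem_prod]
  rw [hfilter] at hω
  exact (by linarith [hsum hF] : _ ≤ (_ : ℝ)).trans hω.le

end VerticesIn

section Label

variable (M : ℕ)

/-- The labels drawn by the vertices: the first coordinate decides the membership in the classes
`C` and `D`, the second one is the value entering `baseWeight`. -/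
abbrev Label : Type :=
  Fin (2 ^ 12 * M ^ 2) × Fin (gridSize M)

/-- The first coordinates that put a vertex into the reservoir `D`. -/
def classD : Set (Fin (2 ^ 12 * M ^ 2)) :=
  {i | (i : ℕ) ∈ ({0} : Finset ℕ)}

/-- The first coordinates that put a vertex into the class `C`. -/
def classC : Set (Fin (2 ^ 12 * M ^ 2)) :=
  {i | (i : ℕ) ∈ Icc 1 (2 ^ 10 * M)}

/-- The labels that make the edge to a vertex of label value `a` heavy. -/
def heavyLabels (a : ℕ) : Set (Label M) :=
  (classD M)ᶜ ×ˢ {i : Fin (gridSize M) | (i : ℕ) ∈ Ico (gridSize M - a) (gridSize M)}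

open Classical in
/-- The sets of labels whose frequency in the neighbourhood of a typical vertex has to be close to
its mean. -/
def testedLabels : Finset (Set (Label M)) :=
  insert (classD M ×ˢ Set.univ) (insert (classC M ×ˢ Set.univ)
    ((range (gridSize M)).image (heavyLabels M)))

lemma card_testedLabels_le : #(testedLabels M) ≤ gridSize M + 2 := by
  classical
  have himage := card_image_le (s := range (gridSize M)) (f := heavyLabels M)
  rw [card_range] at himage
  exact (card_insert_le _ _).trans
    (Nat.succ_le_succ ((card_insert_le _ _).trans (Nat.succ_le_succ himage)))

variable [NeZero M]

instance : Nonempty (Fin (gridSize M)) :=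
  ⟨⟨0, gridSize_pos (NeZero.pos M)⟩⟩

lemma prob_classD : prob (classD M) = probD M := by
  have := NeZero.pos M
  rw [classD, prob_fin_val_mem (singleton_subset_iff.2 (mem_range.2 (by positivity))), probD,
    card_singleton]
  norm_num

lemma prob_classC : prob (classC M) = probC M := by
  have hM := NeZero.pos M
  have : (0 : ℝ) < M := mod_cast hM
  rw [classC, prob_fin_val_mem fun i hi ↦ ?_, probC, Nat.card_Icc]
  · push_cast
    field_simp
    norm_num
  · rw [mem_Icc] at hi
    rw [mem_range]
    nlinarith

lemma prob_heavyLabels {a : ℕ} (ha : a < gridSize M) :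
    prob (heavyLabels M a) = (1 - probD M) * (a / gridSize M) := by
  rw [heavyLabels, prob_prod, prob_compl, prob_classD,
    prob_fin_val_mem (fun i hi ↦ mem_range.2 (mem_Ico.1 hi).2), Nat.card_Ico,
    Nat.sub_sub_self ha.le]

end Label

section Windows

variable (G : SimpleGraph V) [DecidableRel G.Adj] {δ M : ℕ}

lemma expectedWeight_const_eq (a : ℕ) (v : V) :
    expectedWeight G δ M (fun _ ↦ a) v =
      G.degree v * (1 + 2 * blockLength (Fintype.card V) δ * probD M) +
        G.degree v * (topWeight (Fintype.card V) δ M * (1 - probD M)) / gridSize M * a := by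
  unfold expectedWeight
  ring

lemma weightError_nonneg (v : V) : 0 ≤ weightError G δ M v := by
  have := tolerance_nonneg M
  unfold weightError
  positivity

lemma prob_expectedWeight_mem_window_le (hP : ParamsInRange (Fintype.card V) δ M) {v : V}
    (hv : δ ≤ G.degree v) {y₁ y₂ : ℕ} (hy : y₁ ≤ y₂) :
    prob {a : Fin (gridSize M) | y₁ - weightError G δ M v ≤ expectedWeight G δ M (fun _ ↦ a) v ∧
      expectedWeight G δ M (fun _ ↦ a) v ≤ y₂ + weightError G δ M v} ≤
      ((y₂ : ℝ) - y₁) / (δ * (topWeight (Fintype.card V) δ M * (1 - probD M))) +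
        12 * tolerance M := by
  set h : ℝ := (topWeight (Fintype.card V) δ M : ℝ)
  have hh : 0 < h := hP.topWeight_pos
  have hq : probD M ≤ 1 / 80 := by linarith [hP.two_mul_probD_le_probC, hP.probC_le]
  have hN : (0 : ℝ) < gridSize M := mod_cast gridSize_pos (by have := hP.ten_le; omega)
  have hδ := hP.minDeg_pos
  have hv' : (δ : ℝ) ≤ G.degree v := mod_cast hv
  have hd : (0 : ℝ) < G.degree v := hδ.trans_le hv'
  have hslope : 0 < G.degree v * (h * (1 - probD M)) / gridSize M :=
    div_pos (mul_pos hd (mul_pos hh (by linarith))) hN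
  have hy' : (0 : ℝ) ≤ y₂ - y₁ := sub_nonneg.2 (mod_cast hy)
  simp only [expectedWeight_const_eq]
  have herr : 0 ≤ weightError G δ M v := weightError_nonneg G v
  refine (prob_affine_mem_Icc_le _ hslope (by linarith)).trans ?_
  calc ((y₂ + weightError G δ M v - (y₁ - weightError G δ M v)) /
        (G.degree v * (h * (1 - probD M)) / gridSize M) + 1) / gridSize M
    _ = (y₂ - y₁) / (G.degree v * (h * (1 - probD M))) +
        tolerance M * (10 / (1 - probD M) + 1) := by
      have : 1 - probD M ≠ 0 := by linarith
      unfold weightError tolerance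
      field_simp
      ring
    _ ≤ (y₂ - y₁) / (δ * (h * (1 - probD M))) + tolerance M * (11 + 1) := by
      have := tolerance_nonneg M
      gcongr
      · exact mul_pos hδ (mul_pos hh (by linarith))
      · exact (mul_pos hh (by linarith)).le
      · rw [div_le_iff₀ (by linarith)]
        linarith
    _ = _ := by ring

variable [DecidableEq V] [Nonempty V]

lemma prob_window_overfull_le (hP : ParamsInRange (Fintype.card V) δ M)
    (hδ : ∀ v, δ ≤ G.degree v) {E : Set (Fin (2 ^ 12 * M ^ 2))} (hE : probC M ≤ prob E)
    {y₁ y₂ : ℕ} (hy : y₁ ≤ y₂) :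
    prob {ω : V → Label M | prob E * windowBound (Fintype.card V) M y₁ y₂ <
      #(window G δ M (fun v ↦ (ω v).2) (verticesIn (E ×ˢ Set.univ) ω) y₁ y₂)} ≤
      Real.exp (-(tolerance M ^ 2 * (probC M * Fintype.card V) / 4)) := by
  classical
  have := hP.neZero
  have hE₀ : 0 < prob E := hP.probC_pos.trans_le hE
  have hratio : ((y₂ : ℝ) - y₁) / (δ * (topWeight (Fintype.card V) δ M * (1 - probD M))) *
      Fintype.card V ≤ (1 - 4 / M) * (y₂ - y₁) := by
    have hq : probD M < 1 := by linarith [hP.two_mul_probD_le_probC, hP.probC_le]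
    have hy' : (0 : ℝ) ≤ y₂ - y₁ := sub_nonneg.2 (mod_cast hy)
    rw [div_mul_eq_mul_div, div_le_iff₀
      (mul_pos hP.minDeg_pos (mul_pos hP.topWeight_pos (by linarith)))]
    linarith [mul_le_mul_of_nonneg_left hP.card_le_mul_topWeight hy']
  have hτ : 0 ≤ tolerance M * Fintype.card V := mul_nonneg (tolerance_nonneg M) (by positivity)
  refine (prob_mono fun ω hω ↦ ?_).trans ((prob_lt_card_filter_le_exp hE₀ _ (tolerance_nonneg M)
    hP.tolerance_le_one fun v ↦ prob_expectedWeight_mem_window_le G hP (hδ v) hy).trans ?_)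
  · refine lt_of_le_of_lt ?_ (Set.mem_ofPred.1 hω)
    unfold windowBound
    gcongr
    linarith
  · have := tolerance_nonneg M
    gcongr

lemma prob_not_hasSmallWindows_le (hP : ParamsInRange (Fintype.card V) δ M)
    (hδ : ∀ v, δ ≤ G.degree v) {E : Set (Fin (2 ^ 12 * M ^ 2))} (hE : probC M ≤ prob E) :
    prob {ω : V → Label M | ¬ HasSmallWindows G δ M (fun v ↦ (ω v).2)
      (verticesIn (E ×ˢ Set.univ) ω) (prob E)} ≤
      (5 * Fintype.card V ^ 2 + 1) ^ 2 *
        Real.exp (-(tolerance M ^ 2 * (probC M * Fintype.card V) / 4)) := by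
  set R := range (5 * Fintype.card V ^ 2 + 1)
  set overfull : ℕ × ℕ → Set (V → Label M) := fun y ↦
    {ω | prob E * windowBound (Fintype.card V) M y.1 y.2 <
      #(window G δ M (fun v ↦ (ω v).2) (verticesIn (E ×ˢ Set.univ) ω) y.1 y.2)}
  calc prob {ω : V → Label M | ¬ HasSmallWindows G δ M (fun v ↦ (ω v).2)
          (verticesIn (E ×ˢ Set.univ) ω) (prob E)}
    _ ≤ prob (⋃ y ∈ {y ∈ R ×ˢ R | y.1 ≤ y.2}, overfull y) := by
      refine prob_mono fun ω hω ↦ ?_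
      have hω := Set.mem_ofPred.1 hω
      simp only [HasSmallWindows, not_forall, not_le] at hω
      obtain ⟨y₁, y₂, hle, hy₂, hlt⟩ := hω
      simp only [Set.mem_iUnion]
      refine ⟨(y₁, y₂), ?_, Set.mem_ofPred.2 hlt⟩
      simp only [R, mem_filter, mem_product, mem_range]
      omega
    _ ≤ ∑ y ∈ R ×ˢ R with y.1 ≤ y.2, prob (overfull y) := prob_biUnion_le _ _
    _ ≤ #{y ∈ R ×ˢ R | y.1 ≤ y.2} *
        Real.exp (-(tolerance M ^ 2 * (probC M * Fintype.card V) / 4)) := by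
      rw [← nsmul_eq_mul]
      exact sum_le_card_nsmul _ _ _ fun y hy ↦
        prob_window_overfull_le G hP hδ hE (mem_filter.1 hy).2
    _ ≤ _ := by
      gcongr
      have hcard := card_filter_le (R ×ˢ R) fun y ↦ y.1 ≤ y.2
      rw [card_product, card_range, ← sq] at hcard
      exact mod_cast hcard

end Windows

section BadVertices

variable (G : SimpleGraph V) [DecidableRel G.Adj] {δ M : ℕ}

open Classical in
/-- The vertices with an atypical number of neighbours having one of the tested labels. -/
def badVertices (ω : V → Label M) : Finset V :=
  {v | ∃ F ∈ testedLabels M, tolerance M * G.degree v <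
    |degIn G (verticesIn F ω) v - prob F * G.degree v|}

lemma abs_degIn_sub_le_of_notMem_badVertices {ω : V → Label M} {v : V}
    (hv : v ∉ badVertices G ω) {F : Set (Label M)} (hF : F ∈ testedLabels M) :
    |degIn G (verticesIn F ω) v - prob F * G.degree v| ≤ tolerance M * G.degree v := by
  by_contra! hlt
  exact hv ((mem_filter_univ v).2 ⟨F, hF, hlt⟩)

variable [DecidableEq V]

lemma prob_mem_badVertices_le (hP : ParamsInRange (Fintype.card V) δ M) {v : V}
    (hv : δ ≤ G.degree v) :
    prob {ω : V → Label M | v ∈ badVertices G ω} ≤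
      (gridSize M + 2) * (2 * Real.exp (-(tolerance M ^ 2 * G.degree v / 4))) := by
  have := hP.neZero
  have hδ : 0 < δ := mod_cast hP.minDeg_pos
  calc prob {ω : V → Label M | v ∈ badVertices G ω}
    _ ≤ prob (⋃ F ∈ testedLabels M, {ω : V → Label M | tolerance M * G.degree v <
        |degIn G (verticesIn F ω) v - prob F * G.degree v|}) := by
      refine prob_mono fun ω hω ↦ ?_
      obtain ⟨F, hF, hlt⟩ := (mem_filter_univ v).1 (Set.mem_ofPred.1 hω)
      exact Set.mem_biUnion hF (Set.mem_ofPred.2 hlt)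
    _ ≤ ∑ F ∈ testedLabels M, prob {ω : V → Label M | tolerance M * G.degree v <
        |degIn G (verticesIn F ω) v - prob F * G.degree v|} := prob_biUnion_le _ _
    _ ≤ #(testedLabels M) * (2 * Real.exp (-(tolerance M ^ 2 * G.degree v / 4))) := by
      rw [← nsmul_eq_mul]
      exact sum_le_card_nsmul _ _ _ fun F _ ↦ prob_lt_abs_degIn_verticesIn_sub_le G F
        (tolerance_nonneg M) hP.tolerance_le_one (hδ.trans_le hv)
    _ ≤ _ := by
      gcongr
      exact mod_cast card_testedLabels_le M

lemma expect_volume_badVertices :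
    𝔼 ω : V → Label M, (volume G (badVertices G ω) : ℝ) =
      ∑ v, G.degree v * prob {ω : V → Label M | v ∈ badVertices G ω} := by
  simp only [prob, mul_expect]
  rw [← expect_sum_comm]
  refine expect_congr rfl fun ω _ ↦ ?_
  simp [volume, Set.indicator_apply, sum_ite_mem]

end BadVertices

section Existence

/-- The parameters for which all the concentration estimates hold simultaneously with positive
probability. The exponents are those of the Chernoff bounds for the degrees and for the windows. -/
structure IsAdmissible (n δ M : ℕ) : Prop extends ParamsInRange n δ M where
  mul_exp_le : ∀ d : ℕ, δ ≤ d →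
    d * Real.exp (-(d / (2 ^ 56 * M ^ 4))) ≤ 1 / (2 ^ 90 * M ^ 8)
  pow_mul_exp_le : n ^ 4 * Real.exp (-(n / (2 ^ 58 * M ^ 5))) ≤ 1 / 2 ^ 9

namespace IsAdmissible

variable {n δ M : ℕ}

lemma mul_exp_tolerance_le (hA : IsAdmissible n δ M) {d : ℕ} (hd : δ ≤ d) :
    d * ((gridSize M + 2) * (2 * Real.exp (-(tolerance M ^ 2 * d / 4)))) ≤
      probD M ^ 2 * tolerance M / 320 := by
  have hM := hA.ten_le_cast
  have hexp : tolerance M ^ 2 * d / 4 = d / (2 ^ 56 * M ^ 4) := by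
    unfold tolerance gridSize
    push_cast
    field_simp
    ring
  have hgrid : (gridSize M + 2 : ℝ) * 2 ≤ 2 ^ 29 * M ^ 2 := by
    unfold gridSize
    push_cast
    nlinarith
  rw [hexp]
  calc d * ((gridSize M + 2) * (2 * Real.exp (-(d / (2 ^ 56 * M ^ 4)))))
    _ = (gridSize M + 2) * 2 * (d * Real.exp (-(d / (2 ^ 56 * M ^ 4)))) := by ring
    _ ≤ 2 ^ 29 * M ^ 2 * (1 / (2 ^ 90 * M ^ 8)) := by
      gcongr
      exact hA.mul_exp_le d hd
    _ ≤ probD M ^ 2 * tolerance M / 320 := by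
      unfold probD tolerance gridSize
      push_cast
      field_simp
      norm_num

lemma sq_mul_exp_tolerance_le (hA : IsAdmissible n δ M) :
    (5 * n ^ 2 + 1) ^ 2 * Real.exp (-(tolerance M ^ 2 * (probC M * n) / 4)) ≤ 1 / 8 := by
  have hM := hA.cast_pos
  have hexp : tolerance M ^ 2 * (probC M * n) / 4 = n / (2 ^ 58 * M ^ 5) := by
    unfold tolerance gridSize probC
    push_cast
    field_simp
    ring
  have hn : (1 : ℝ) ≤ n := Nat.one_le_cast.2 (Nat.cast_pos.1 hA.card_pos)
  rw [hexp]
  calc (5 * (n : ℝ) ^ 2 + 1) ^ 2 * Real.exp (-(n / (2 ^ 58 * M ^ 5)))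
    _ ≤ 36 * n ^ 4 * Real.exp (-(n / (2 ^ 58 * M ^ 5))) := by
      gcongr
      nlinarith [one_le_pow₀ (n := 2) hn]
    _ ≤ 36 * (1 / 2 ^ 9) := by
      rw [mul_assoc]
      gcongr
      exact hA.pow_mul_exp_le
    _ ≤ 1 / 8 := by norm_num

end IsAdmissible

variable {G : SimpleGraph V} [DecidableRel G.Adj] {δ M : ℕ} [DecidableEq V]

lemma prob_le_volume_badVertices_le (hA : IsAdmissible (Fintype.card V) δ M)
    (hδ : ∀ v, δ ≤ G.degree v) :
    prob {ω : V → Label M | probD M ^ 2 * (tolerance M * Fintype.card V) / 80 ≤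
      volume G (badVertices G ω)} ≤ 1 / 4 := by
  have hq := hA.probD_pos
  have hτ := hA.tolerance_pos
  have hn := hA.card_pos
  have hpos : 0 < probD M ^ 2 * (tolerance M * Fintype.card V) / 80 := by positivity
  refine (prob_le_expect_div (fun ω ↦ Nat.cast_nonneg _) hpos).trans ?_
  rw [div_le_iff₀ hpos, expect_volume_badVertices]
  calc ∑ v, G.degree v * prob {ω : V → Label M | v ∈ badVertices G ω}
    _ ≤ ∑ _v : V, probD M ^ 2 * tolerance M / 320 := by
      refine sum_le_sum fun v _ ↦ le_trans ?_ (hA.mul_exp_tolerance_le (hδ v))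
      gcongr
      exact prob_mem_badVertices_le G hA.toParamsInRange (hδ v)
    _ = 1 / 4 * (probD M ^ 2 * (tolerance M * Fintype.card V) / 80) := by
      rw [sum_const, card_univ, nsmul_eq_mul]
      ring

lemma isGoodSplit_of_typical [NeZero M] {ω : V → Label M}
    (hvol : volume G (badVertices G ω) ≤ probD M ^ 2 * (tolerance M * Fintype.card V) / 80)
    (hD : #(verticesIn (classD M ×ˢ Set.univ) ω) ≤ 4 * probD M * Fintype.card V)
    (huniv : HasSmallWindows G δ M (fun v ↦ (ω v).2) univ 1)
    (hC : HasSmallWindows G δ M (fun v ↦ (ω v).2) (verticesIn (classC M ×ˢ Set.univ) ω)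
      (probC M)) :
    IsGoodSplit G δ M (fun v ↦ (ω v).2) (verticesIn (classC M ×ˢ Set.univ) ω)
      (verticesIn (classD M ×ˢ Set.univ) ω) (badVertices G ω) where
  disjoint := by
    simp only [disjoint_left, mem_verticesIn, classC, classD, Set.mem_prod, Set.mem_ofPred_eq,
      mem_Icc, mem_singleton]
    omega
  label_lt v := (ω v).2.2
  abs_degIn_D_sub_le v hv := by
    have := abs_degIn_sub_le_of_notMem_badVertices G hv (mem_insert_self _ _)
    rwa [prob_prod, prob_univ, prob_classD, mul_one] at this
  abs_degIn_C_sub_le v hv := by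
    have := abs_degIn_sub_le_of_notMem_badVertices G hv
      (mem_insert_of_mem (mem_insert_self _ _))
    rwa [prob_prod, prob_univ, prob_classC, mul_one] at this
  abs_degIn_heavy_sub_le v hv a ha := by
    have := abs_degIn_sub_le_of_notMem_badVertices G hv (mem_insert_of_mem
      (mem_insert_of_mem (mem_image_of_mem (heavyLabels M) (mem_range.2 ha))))
    rw [prob_heavyLabels M ha] at this
    convert this using 5
    ext u
    have hu := (ω u).2.2
    simp only [mem_filter_univ, mem_verticesIn, heavyLabels, Set.mem_prod, Set.mem_compl_iff,
      Set.mem_univ, and_true, Set.mem_ofPred_eq, mem_Ico]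
    refine and_congr_right fun _ ↦ ?_
    omega
  volume_bad_le := hvol
  card_D_le := hD
  smallWindows_univ := huniv
  smallWindows_C := hC

lemma exists_isGoodSplit (hA : IsAdmissible (Fintype.card V) δ M) (hδ : ∀ v, δ ≤ G.degree v) :
    ∃ x C D Bad, IsGoodSplit G δ M x C D Bad := by
  have hP := hA.toParamsInRange
  have := hP.neZero
  have : Nonempty V := Fintype.card_pos_iff.1 (Nat.cast_pos.1 hP.card_pos)
  have hprobC : prob (classC M) = probC M := prob_classC M
  have hprobD : prob (classD M) = probD M := prob_classD M
  have hvol := prob_le_volume_badVertices_le hA hδ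
  have hD := prob_lt_card_verticesIn_le (V := V) (classD M ×ˢ (Set.univ : Set (Fin (gridSize M))))
    (by rw [prob_prod, prob_univ, hprobD, mul_one]; exact hP.probD_pos)
  have huniv := (prob_not_hasSmallWindows_le G hP hδ (E := Set.univ)
    (by rw [prob_univ]; linarith [hP.probC_le])).trans hA.sq_mul_exp_tolerance_le
  have hC := (prob_not_hasSmallWindows_le G hP hδ hprobC.ge).trans hA.sq_mul_exp_tolerance_le
  rw [prob_prod, prob_univ, hprobD, mul_one] at hD
  rw [prob_univ] at huniv
  rw [hprobC] at hC
  obtain ⟨ω, hω⟩ := exists_notMem_of_prob_lt_one <| lt_of_le_of_lt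
    ((prob_union_le _ _).trans (add_le_add ((prob_union_le _ _).trans (add_le_add hvol hD))
      ((prob_union_le _ _).trans (add_le_add huniv hC))))
    (by linarith [hP.exp_neg_probD_mul_card_le])
  simp only [Set.mem_union, Set.mem_ofPred_eq, not_or, not_le, not_lt, not_not] at hω
  obtain ⟨⟨hvol, hD⟩, huniv, hC⟩ := hω
  rw [Set.univ_prod_univ, verticesIn_univ] at huniv
  exact ⟨_, _, _, _, isGoodSplit_of_typical hvol.le hD huniv hC⟩

end Existence

end RandomSplit

section Accuracy

open Filter

lemma eventually_rpow_mul_exp_neg_mul_rpow_le (s : ℝ) {c κ b : ℝ} (hc : 0 < c) (hκ : 0 < κ)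
    (hb : 0 < b) : ∀ᶠ x : ℝ in atTop, x ^ s * Real.exp (-(c * x ^ κ)) ≤ b := by
  have htendsto := (tendsto_rpow_mul_exp_neg_mul_atTop_nhds_zero (s / κ) c hc).comp
    (tendsto_rpow_atTop hκ)
  filter_upwards [htendsto.eventually (ge_mem_nhds hb), eventually_ge_atTop 0] with x hx hx₀
  rwa [Function.comp_apply, ← Real.rpow_mul hx₀, mul_div_cancel₀ _ hκ.ne', neg_mul] at hx

lemma rpow_one_sub_mul_le_div_pow {x y α : ℝ} (hx : 0 < x) (hy : 0 < y) (hyx : y ≤ x ^ α)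
    (k : ℕ) : x ^ (1 - k * α) ≤ x / y ^ k := by
  rw [le_div_iff₀ (by positivity)]
  calc x ^ (1 - k * α) * y ^ k
    _ ≤ x ^ (1 - k * α) * (x ^ α) ^ k := by gcongr
    _ = x := by
      rw [← Real.rpow_mul_natCast hx.le, ← Real.rpow_add hx, mul_comm α, sub_add_cancel,
        Real.rpow_one]

lemma exp_neg_div_mul_pow_le {x y α a : ℝ} (hx : 0 < x) (hy : 0 < y) (ha : 0 < a)
    (hyx : y ≤ x ^ α) (k : ℕ) :
    Real.exp (-(x / (a * y ^ k))) ≤ Real.exp (-(1 / a * x ^ (1 - k * α))) := by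
  have := rpow_one_sub_mul_le_div_pow hx hy hyx k
  rw [Real.exp_le_exp, neg_le_neg_iff, ← div_div, div_right_comm, one_div_mul_eq_div]
  gcongr

/-- The accuracy parameter: as large as `δ ^ ε` and `n / δ` allow, so that the error `11 / M`
either is of order `δ ^ (-ε)` or contributes only a bounded amount after multiplication
by `n / δ`. -/
def accuracy (ε : ℝ) (n δ : ℕ) : ℕ :=
  max 10 (min ⌊(δ : ℝ) ^ ε⌋₊ (n / δ))

variable {ε : ℝ} {n δ : ℕ}

lemma ten_le_accuracy (ε : ℝ) (n δ : ℕ) : 10 ≤ accuracy ε n δ :=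
  le_max_left _ _

lemma accuracy_pos (ε : ℝ) (n δ : ℕ) : (0 : ℝ) < accuracy ε n δ :=
  Nat.cast_pos.2 (by linarith [ten_le_accuracy ε n δ])

lemma min_floor_le_rpow (ε : ℝ) (n δ : ℕ) :
    ((min ⌊(δ : ℝ) ^ ε⌋₊ (n / δ) : ℕ) : ℝ) ≤ (δ : ℝ) ^ ε :=
  (Nat.cast_le.2 (min_le_left _ _)).trans (Nat.floor_le (by positivity))

lemma accuracy_le_rpow_minDeg (n : ℕ) (h : 10 ≤ (δ : ℝ) ^ ε) :
    (accuracy ε n δ : ℝ) ≤ (δ : ℝ) ^ ε := by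
  rw [accuracy, Nat.cast_max]
  exact max_le (mod_cast h) (min_floor_le_rpow ε n δ)

lemma le_rpow_of_le_rpow_of_le_div {m x y : ℝ} (hε : 0 < ε) (hm : 0 ≤ m) (hx : 0 < x)
    (hy : 0 ≤ y) (hmx : m ≤ x ^ ε) (hmy : m ≤ y / x) : m ≤ y ^ (ε / (1 + ε)) := by
  have hpow : m ^ (1 + ε) ≤ y ^ ε := by
    calc m ^ (1 + ε)
      _ = m * m ^ ε := by rw [Real.rpow_add_of_nonneg hm one_pos.le hε.le, Real.rpow_one]
      _ ≤ x ^ ε * (y / x) ^ ε := by gcongr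
      _ = y ^ ε := by rw [← Real.mul_rpow hx.le (by positivity), mul_div_cancel₀ _ hx.ne']
  calc m
    _ = (m ^ (1 + ε)) ^ (1 + ε)⁻¹ := (Real.rpow_rpow_inv hm (by positivity)).symm
    _ ≤ (y ^ ε) ^ (1 + ε)⁻¹ := by gcongr
    _ = y ^ (ε / (1 + ε)) := by rw [← Real.rpow_mul hy, div_eq_mul_inv]

lemma accuracy_le_rpow_card (hε : 0 < ε) (hδ : 0 < δ) (h : 10 ≤ (n : ℝ) ^ (ε / (1 + ε))) :
    (accuracy ε n δ : ℝ) ≤ (n : ℝ) ^ (ε / (1 + ε)) := by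
  rw [accuracy, Nat.cast_max]
  refine max_le (mod_cast h) (le_rpow_of_le_rpow_of_le_div hε (Nat.cast_nonneg _)
    (Nat.cast_pos.2 hδ) (Nat.cast_nonneg n) (min_floor_le_rpow ε n δ) ?_)
  exact (Nat.cast_le.2 (min_le_right _ _)).trans Nat.cast_div_le

lemma mul_exp_neg_div_le {d M : ℝ} (hε : ε < 1 / 4) (hM : 0 < M) (hd : 1 ≤ d) (hMd : M ≤ d ^ ε)
    (hdecay : d ^ (3 : ℝ) * Real.exp (-(1 / 2 ^ 56 * d ^ (1 - 4 * ε))) ≤ 1 / 2 ^ 90) :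
    d * Real.exp (-(d / (2 ^ 56 * M ^ 4))) ≤ 1 / (2 ^ 90 * M ^ 8) := by
  have hd₀ : 0 < d := by linarith
  have hM₄ : M ^ 4 ≤ d := by
    have := (Real.one_le_rpow hd (by push_cast; linarith)).trans
      (rpow_one_sub_mul_le_div_pow hd₀ hM hMd 4)
    rwa [one_le_div (by positivity)] at this
  rw [le_div_iff₀ (by positivity)]
  calc d * Real.exp (-(d / (2 ^ 56 * M ^ 4))) * (2 ^ 90 * M ^ 8)
    _ = d * Real.exp (-(d / (2 ^ 56 * M ^ 4))) * (2 ^ 90 * (M ^ 4) ^ 2) := by ring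
    _ ≤ d * Real.exp (-(1 / 2 ^ 56 * d ^ (1 - 4 * ε))) * (2 ^ 90 * d ^ 2) := by
      gcongr _ * ?_ * (_ * ?_ ^ 2)
      exact mod_cast exp_neg_div_mul_pow_le hd₀ hM (by positivity) hMd 4
    _ = 2 ^ 90 * (d ^ (3 : ℝ) * Real.exp (-(1 / 2 ^ 56 * d ^ (1 - 4 * ε)))) := by
      rw [show (3 : ℝ) = (3 : ℕ) by norm_num, Real.rpow_natCast]
      ring
    _ ≤ 1 := by linarith

lemma eventually_isAdmissible_accuracy (hε₀ : 0 < ε) (hε : ε < 1 / 4) :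
    ∀ᶠ δ : ℕ in atTop, ∀ n ≥ δ, IsAdmissible n δ (accuracy ε n δ) := by
  set ρ := ε / (1 + ε) with hρ
  have hρ₀ : 0 < ρ := by positivity
  have hρ₅ : 5 * ρ < 1 := by
    rw [hρ, mul_div_assoc', div_lt_one (by linarith)]
    linarith
  have hlarge := ((tendsto_rpow_atTop hε₀).eventually_ge_atTop 10).and <|
    ((tendsto_rpow_atTop hρ₀).eventually_ge_atTop 10).and <|
    ((tendsto_rpow_atTop (y := 1 - 4 * ε) (by linarith)).eventually_ge_atTop (2 ^ 30)).and <|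
    (eventually_rpow_mul_exp_neg_mul_rpow_le 3 (c := 1 / 2 ^ 56) (κ := 1 - 4 * ε)
      (b := 1 / 2 ^ 90) (by positivity) (by linarith) (by positivity)).and <|
    eventually_rpow_mul_exp_neg_mul_rpow_le 4 (c := 1 / 2 ^ 58) (κ := 1 - 5 * ρ)
      (b := 1 / 2 ^ 9) (by positivity) (by linarith) (by positivity)
  filter_upwards [tendsto_natCast_atTop_atTop.eventually (eventually_forall_ge_atTop.2 hlarge),
    eventually_gt_atTop 0] with δ hlarge hδ n hn
  have hδ' : (0 : ℝ) < δ := Nat.cast_pos.2 hδ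
  have hn' : (0 : ℝ) < n := Nat.cast_pos.2 (hδ.trans_le hn)
  have hM := accuracy_pos ε n δ
  have hMδ := accuracy_le_rpow_minDeg n (hlarge δ le_rfl).1
  have hMn := accuracy_le_rpow_card hε₀ hδ (hlarge n (mod_cast hn)).2.1
  refine ⟨⟨ten_le_accuracy ε n δ, ?_, hn⟩, fun d hd ↦ ?_, ?_⟩
  · have := (hlarge δ le_rfl).2.2.1.trans
      (by simpa using rpow_one_sub_mul_le_div_pow hδ' hM hMδ 4)
    rw [le_div_iff₀ (by positivity)] at this
    exact_mod_cast this
  · have hd' : (δ : ℝ) ≤ d := mod_cast hd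
    exact mul_exp_neg_div_le hε hM (mod_cast hδ.trans_le hd) (hMδ.trans (by gcongr))
      (hlarge d hd').2.2.2.1
  · refine le_trans ?_ (hlarge n (mod_cast hn)).2.2.2.2
    rw [show (4 : ℝ) = (4 : ℕ) by norm_num, Real.rpow_natCast]
    gcongr n ^ 4 * ?_
    simpa using exp_neg_div_mul_pow_le hn' hM (a := 2 ^ 58) (by positivity) hMn 5

end Accuracy

section FinalBound

variable {ε C : ℝ} {n δ : ℕ}

lemma two_mul_add_one_le_of_minDeg_le {δ₀ : ℕ} (hε : ε ≤ 1) (hδ : 1 ≤ δ) (hδ₀ : δ ≤ δ₀)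
    (hC : 2 * (δ₀ : ℝ) ^ 2 ≤ C) :
    (2 * n + 1 : ℝ) ≤ n / δ * (1 + C / (δ : ℝ) ^ ε) + 30 := by
  have hδ' : (1 : ℝ) ≤ δ := mod_cast hδ
  have hδ₀' : (δ : ℝ) ≤ δ₀ := mod_cast hδ₀
  have hpow : (δ : ℝ) ^ ε ≤ δ₀ := (Real.rpow_le_self_of_one_le hδ' hε).trans hδ₀'
  have hCδ : 2 * (δ : ℝ) ≤ C / (δ : ℝ) ^ ε := by
    rw [le_div_iff₀ (by positivity)]
    calc 2 * δ * (δ : ℝ) ^ ε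
      _ ≤ 2 * δ₀ * δ₀ := by gcongr
      _ ≤ C := by linarith
  calc (2 * n + 1 : ℝ)
    _ = n / δ * (2 * δ) + 1 := by field_simp
    _ ≤ n / δ * (1 + C / (δ : ℝ) ^ ε) + 30 := by
      gcongr
      · linarith
      · norm_num

lemma half_le_floor {y : ℝ} (hy : 1 ≤ y) : y / 2 ≤ ⌊y⌋₊ := by
  have : (1 : ℝ) ≤ ⌊y⌋₊ := mod_cast Nat.one_le_floor_iff y |>.2 hy
  linarith [Nat.lt_floor_add_one y]

lemma div_mul_one_add_div_accuracy_le (hε : 0 ≤ ε) (hδ : 1 ≤ δ) (hδn : δ ≤ n) (hC : 22 ≤ C) :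
    (n / δ * (1 + 11 / accuracy ε n δ) + 8 : ℝ) ≤ n / δ * (1 + C / (δ : ℝ) ^ ε) + 30 := by
  have hM := accuracy_pos ε n δ
  have hδ' : (1 : ℝ) ≤ δ := mod_cast hδ
  have hratio : 1 ≤ (n / δ : ℝ) := (one_le_div (by linarith)).2 (mod_cast hδn)
  have hpow := Real.one_le_rpow hδ' hε
  rcases le_total ⌊(δ : ℝ) ^ ε⌋₊ (n / δ) with hmin | hmin
  · have hle : (δ : ℝ) ^ ε / 2 ≤ accuracy ε n δ := (half_le_floor hpow).trans
      (mod_cast (min_eq_left hmin).ge.trans (le_max_right _ _))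
    have : 11 / (accuracy ε n δ : ℝ) ≤ C / (δ : ℝ) ^ ε := by
      rw [div_le_div_iff₀ hM (by linarith)]
      nlinarith
    gcongr
    norm_num
  · have hle : (n / δ : ℝ) / 2 ≤ accuracy ε n δ := (half_le_floor hratio).trans <| by
      rw [Nat.floor_div_eq_div]
      exact mod_cast (min_eq_right hmin).ge.trans (le_max_right _ _)
    have hbounded : (n / δ : ℝ) * (11 / accuracy ε n δ) ≤ 22 := by
      rw [mul_div_assoc', div_le_iff₀ hM]
      linarith
    have : 0 ≤ (n / δ : ℝ) * (C / (δ : ℝ) ^ ε) := by positivity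
    linarith

end FinalBound

section Assignments

variable {V : Type*} [Fintype V] {G : SimpleGraph V} [DecidableRel G.Adj]

lemma exists_isIrregularAssignment_of_isAdmissible {δ M : ℕ}
    (hA : IsAdmissible (Fintype.card V) δ M) (hδ : ∀ v, δ ≤ G.degree v) :
    ∃ k f, IsIrregularAssignment G k f ∧ (k : ℝ) ≤ Fintype.card V / δ * (1 + 11 / M) + 8 := by
  classical
  obtain ⟨x, C, D, Bad, hs⟩ := exists_isGoodSplit hA hδ
  exact hs.exists_isIrregularAssignment hA.toParamsInRange hδ

lemma exists_adj_of_minDegree_pos (h : 0 < G.minDegree) : ∃ u v, G.Adj u v := by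
  rcases isEmpty_or_nonempty V with hV | ⟨⟨v⟩⟩
  · exact absurd G.minDegree_of_subsingleton h.ne'
  obtain ⟨w, hw⟩ := (G.degree_pos_iff_exists_adj v).1 (h.trans_le (G.minDegree_le_degree v))
  exact ⟨v, w, hw⟩

lemma exists_isIrregularAssignment_le {ε : ℝ} (hε₀ : 0 ≤ ε) (hε₁ : ε ≤ 1) {δ₀ δ : ℕ}
    (hadm : ∀ δ ≥ δ₀, ∀ n ≥ δ, IsAdmissible n δ (accuracy ε n δ)) (hδ : 1 ≤ δ)
    (hdeg : ∀ v, δ ≤ G.degree v) (hδV : δ ≤ Fintype.card V)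
    (hiso : ¬ ∃ u v, G.Adj u v ∧ G.degree u = 1 ∧ G.degree v = 1) :
    ∃ k f, IsIrregularAssignment G k f ∧
      (k : ℝ) ≤ Fintype.card V / δ * (1 + (2 * δ₀ ^ 2 + 22) / (δ : ℝ) ^ ε) + 30 := by
  classical
  rcases lt_or_ge δ δ₀ with hsmall | hlarge
  · obtain ⟨f, hf⟩ := exists_isIrregularAssignment_two_mul_card_add_one
      (fun v ↦ hδ.trans (hdeg v)) hiso
    refine ⟨_, f, hf, ?_⟩
    push_cast
    exact two_mul_add_one_le_of_minDeg_le hε₁ hδ hsmall.le (by linarith)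
  · obtain ⟨k, f, hf, hk⟩ :=
      exists_isIrregularAssignment_of_isAdmissible (hadm δ hlarge _ hδV) hdeg
    exact ⟨k, f, hf, hk.trans (div_mul_one_add_div_accuracy_le hε₀ hδ hδV
      (by linarith [sq_nonneg (δ₀ : ℝ)]))⟩

end Assignments

/-- Generalized Faudree–Lehel conjecture, asymptotic form: for every `ε ∈ (0, 0.25)`
there are absolute constants `C₁, C₂` such that every graph `G` on `n` vertices with
minimum degree `δ ≥ 1` and without isolated edges satisfies
`s(G) ≤ (n/δ)(1 + C₁/δ^ε) + C₂`. -/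
theorem generalized_faudree_lehel_asymptotic :
    ∀ ε : ℝ, ε ∈ Set.Ioo (0 : ℝ) 0.25 →
    ∃ C₁ C₂ : ℝ, ∀ (V : Type) [Fintype V] (G : SimpleGraph V) [DecidableRel G.Adj]
      (n δ : ℕ), Fintype.card V = n → G.minDegree = δ → 1 ≤ δ →
      (¬ ∃ u v : V, G.Adj u v ∧ G.degree u = 1 ∧ G.degree v = 1) →
      ∃ s : ℕ, irregularityStrength G = (s : ℕ∞) ∧
        (s : ℝ) ≤ ((n : ℝ) / (δ : ℝ)) * (1 + C₁ / (δ : ℝ) ^ ε) + C₂ := by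
  rintro ε ⟨hε₀, hε⟩
  replace hε : ε < 1 / 4 := by linarith
  obtain ⟨δ₀, hadm⟩ := Filter.eventually_atTop.1 (eventually_isAdmissible_accuracy hε₀ hε)
  refine ⟨2 * δ₀ ^ 2 + 22, 30, fun V _ G _ n δ hn hmin hδ hiso ↦ ?_⟩
  have hdeg v : δ ≤ G.degree v := hmin ▸ G.minDegree_le_degree v
  obtain ⟨v, w, hvw⟩ := exists_adj_of_minDegree_pos (hδ.trans_eq hmin.symm)
  have hδn : δ ≤ n := hn ▸ (hdeg v).trans (G.degree_lt_card_verts v).le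
  obtain ⟨k, f, hf, hk⟩ := exists_isIrregularAssignment_le hε₀.le (by linarith) hadm hδ hdeg
    (hδn.trans_eq hn.symm) hiso
  rw [hn] at hk
  obtain ⟨s, hs, hsk⟩ := exists_irregularityStrength_eq_le ⟨v, w, hvw⟩ ⟨f, hf⟩
  exact ⟨s, hs, (Nat.cast_le.2 hsk).trans hk⟩

end FL
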